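/- Let (ρ_h^k)_{k∈ℕ} solve the constrained minimizing movement scheme ρᵏ = argmin_{ρ∈M^{ℓ(kh)}} (½W₂²(ρ^{k-1},ρ) + hF(ρ)) under the stated growth assumptions on H and with Lipschitz ℓ. Then for every test function ζ ∈ C_c^∞(ℝ) and every k ∈ ℕ one has the estimate |∫(ρ_h^k − ρ_h^{k-1})/h · ζ dx + ∫((H'(x) − σ_h^k)∂_x ζ − ∂_{xx}ζ) ρ_h^k dx| ≤ (sup_ℝ |∂_{xx}ζ|/2) · (1/h) W₂²(ρ_h^{k-1}, ρ_h^k), where the discrete Lagrange multiplier equals σ_h^k = ∫H'(x)ρ_h^k(x)dx + (1/h)∫(ρ_h^k(x) − ρ_h^{k-1}(x)) x dx. -/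

import Mathlib

open MeasureTheory Real Filter

noncomputable section

/-- An (a.e. defined) probability density on `ℝ` with finite second moment. -/
def IsP2 (ρ : ℝ → ℝ) : Prop :=
  (∀ x, 0 ≤ ρ x) ∧ MeasureTheory.Integrable ρ ∧ (∫ x, ρ x) = 1 ∧
    MeasureTheory.Integrable (fun x => x ^ 2 * ρ x)

/-- First moment. -/
def M1 (ρ : ℝ → ℝ) : ℝ := ∫ x, x * ρ x

/-- Second moment. -/
def M2 (ρ : ℝ → ℝ) : ℝ := ∫ x, x ^ 2 * ρ x

/-- The constrained manifold `M^ℓ` of probability densities with first moment `ℓ`. -/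
def Mset (l : ℝ) : Set (ℝ → ℝ) := {ρ | IsP2 ρ ∧ M1 ρ = l}

/-- The measure with density `ρ` with respect to Lebesgue measure. -/
def densMeasure (ρ : ℝ → ℝ) : Measure ℝ :=
  MeasureTheory.volume.withDensity fun x => ENNReal.ofReal (ρ x)

/-- `pl` is a coupling of the densities `ρ₀` and `ρ₁`. -/
def IsCoupling (pl : Measure (ℝ × ℝ)) (ρ₀ ρ₁ : ℝ → ℝ) : Prop :=
  pl.map Prod.fst = densMeasure ρ₀ ∧ pl.map Prod.snd = densMeasure ρ₁

/-- Squared 2-Wasserstein distance between two densities. -/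
def W2sq (ρ₀ ρ₁ : ℝ → ℝ) : ℝ :=
  sInf {c : ℝ | ∃ pl : Measure (ℝ × ℝ), IsCoupling pl ρ₀ ρ₁ ∧
    c = ∫ p : ℝ × ℝ, (p.1 - p.2) ^ 2 ∂pl}

/-- The free energy `F(ρ) = ∫ ρ log ρ + ∫ H ρ + log Z₀`, `Z₀ = ∫ exp (-H)`. -/
def FreeEnergy (H ρ : ℝ → ℝ) : ℝ :=
  (∫ x, ρ x * Real.log (ρ x)) + (∫ x, H x * ρ x) + Real.log (∫ x, Real.exp (-H x))

/-- Finiteness of the free energy: both the entropy and potential integrands are integrable. -/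
def FiniteFreeEnergy (H ρ : ℝ → ℝ) : Prop :=
  MeasureTheory.Integrable (fun x => ρ x * Real.log (ρ x)) ∧
  MeasureTheory.Integrable (fun x => H x * ρ x)

/-- Growth assumptions on the potential `H` (Assumption 3.1). -/
def GrowthAssumptions (H : ℝ → ℝ) (C : ℝ) : Prop :=
  ContDiff ℝ 3 H ∧ (∀ x, 0 ≤ H x) ∧ 0 < C ∧
  (∀ x, H x ≤ C * (1 + |x| ^ 2)) ∧
  (∀ x, |deriv H x| ≤ C * (1 + |x|)) ∧
  (∀ x, |deriv (deriv H) x| ≤ C) ∧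
  (∀ x, |deriv (deriv (deriv H)) x| ≤ C / (1 + |x|))

/-- `ℓ ∈ W^{1,∞}(ℝ₊;ℝ)`: Lipschitz and bounded on `[0,∞)`. -/
def LipschitzBoundedOnNonneg (l : ℝ → ℝ) : Prop :=
  (∃ L : NNReal, LipschitzOnWith L l (Set.Ici 0)) ∧ ∃ B : ℝ, ∀ t ≥ (0:ℝ), |l t| ≤ B

/-- The functional minimized at each step of the scheme. -/
def SchemeObjective (H : ℝ → ℝ) (h : ℝ) (ρprev ρ : ℝ → ℝ) : ℝ :=
  W2sq ρprev ρ / 2 + h * FreeEnergy H ρ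

/-- `ρs` solves the constrained minimizing movement (implicit Euler) scheme with time step `h`. -/
def SolvesScheme (H l : ℝ → ℝ) (h : ℝ) (ρ0 : ℝ → ℝ) (ρs : ℕ → ℝ → ℝ) : Prop :=
  ρs 0 = ρ0 ∧ ∀ k : ℕ, 1 ≤ k →
    ρs k ∈ Mset (l (k * h)) ∧
    ∀ ρ ∈ Mset (l (k * h)),
      SchemeObjective H h (ρs (k - 1)) (ρs k) ≤ SchemeObjective H h (ρs (k - 1)) ρ

/-- The discrete Lagrange multiplier `σ_h^k`. -/
def discreteSigma (H : ℝ → ℝ) (h : ℝ) (ρs : ℕ → ℝ → ℝ) (k : ℕ) : ℝ :=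
  (∫ x, deriv H x * ρs k x) + (1 / h) * ∫ x, (ρs k x - ρs (k - 1) x) * x


lemma IsP2.aem {ρ : ℝ → ℝ} (hρ : IsP2 ρ) : AEMeasurable (fun x => ENNReal.ofReal (ρ x)) :=
  hρ.2.1.aestronglyMeasurable.aemeasurable.ennreal_ofReal

lemma integral_dens {ρ : ℝ → ℝ} (hρ : IsP2 ρ) (f : ℝ → ℝ) :
    ∫ x, f x ∂(densMeasure ρ) = ∫ x, f x * ρ x := by
  unfold densMeasure
  rw [integral_withDensity_eq_integral_toReal_smul₀ hρ.aem (by simp)]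
  refine integral_congr_ae (ae_of_all _ fun x => ?_)
  simp [ENNReal.toReal_ofReal (hρ.1 x), mul_comm]

lemma integrable_dens {ρ : ℝ → ℝ} (hρ : IsP2 ρ) (f : ℝ → ℝ) :
    Integrable f (densMeasure ρ) ↔ Integrable (fun x => f x * ρ x) := by
  unfold densMeasure
  rw [integrable_withDensity_iff_integrable_smul₀' hρ.aem (by simp)]
  refine integrable_congr (ae_of_all _ fun x => ?_)
  simp [ENNReal.toReal_ofReal (hρ.1 x), mul_comm]

lemma IsP2.isProb {ρ : ℝ → ℝ} (hρ : IsP2 ρ) : IsProbabilityMeasure (densMeasure ρ) := by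
  constructor
  unfold densMeasure
  rw [withDensity_apply _ MeasurableSet.univ, Measure.restrict_univ,
    ← ofReal_integral_eq_lintegral_ofReal hρ.2.1 (ae_of_all _ hρ.1), hρ.2.2.1]
  simp

lemma dens_ac (ρ : ℝ → ℝ) : densMeasure ρ ≪ volume := withDensity_absolutelyContinuous _ _

lemma IsCoupling.isProb {pl : Measure (ℝ × ℝ)} {ρ₀ ρ₁ : ℝ → ℝ} (h : IsCoupling pl ρ₀ ρ₁)
    (h0 : IsP2 ρ₀) : IsProbabilityMeasure pl := by
  have := h0.isProb
  rw [← h.1] at this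
  constructor
  have h2 := this.measure_univ
  rwa [Measure.map_apply measurable_fst MeasurableSet.univ, Set.preimage_univ] at h2

lemma IsCoupling.int_fst {pl : Measure (ℝ × ℝ)} {ρ₀ ρ₁ : ℝ → ℝ} (h : IsCoupling pl ρ₀ ρ₁)
    (h0 : IsP2 ρ₀) {f : ℝ → ℝ} (hf : Measurable f) :
    ∫ p, f p.1 ∂pl = ∫ x, f x * ρ₀ x := by
  rw [← integral_dens h0, ← h.1, integral_map measurable_fst.aemeasurable
    hf.aestronglyMeasurable]

lemma IsCoupling.int_snd {pl : Measure (ℝ × ℝ)} {ρ₀ ρ₁ : ℝ → ℝ} (h : IsCoupling pl ρ₀ ρ₁)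
    (h1 : IsP2 ρ₁) {f : ℝ → ℝ} (hf : Measurable f) :
    ∫ p, f p.2 ∂pl = ∫ x, f x * ρ₁ x := by
  rw [← integral_dens h1, ← h.2, integral_map measurable_snd.aemeasurable
    hf.aestronglyMeasurable]

lemma IsCoupling.integrable_sq_fst {pl : Measure (ℝ × ℝ)} {ρ₀ ρ₁ : ℝ → ℝ}
    (h : IsCoupling pl ρ₀ ρ₁) (h0 : IsP2 ρ₀) : Integrable (fun p : ℝ × ℝ => p.1 ^ 2) pl := by
  have := (integrable_dens h0 (fun x => x ^ 2)).2 h0.2.2.2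
  rw [← h.1] at this
  exact this.comp_measurable measurable_fst

lemma IsCoupling.integrable_sq_snd {pl : Measure (ℝ × ℝ)} {ρ₀ ρ₁ : ℝ → ℝ}
    (h : IsCoupling pl ρ₀ ρ₁) (h1 : IsP2 ρ₁) : Integrable (fun p : ℝ × ℝ => p.2 ^ 2) pl := by
  have := (integrable_dens h1 (fun x => x ^ 2)).2 h1.2.2.2
  rw [← h.2] at this
  exact this.comp_measurable measurable_snd

lemma IsCoupling.integrable_of_bound {pl : Measure (ℝ × ℝ)} {ρ₀ ρ₁ : ℝ → ℝ}
    (h : IsCoupling pl ρ₀ ρ₁) (h0 : IsP2 ρ₀) (h1 : IsP2 ρ₁) {f : ℝ × ℝ → ℝ} (hf : Measurable f)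
    (K : ℝ) (hK : ∀ p : ℝ × ℝ, |f p| ≤ K * (1 + p.1 ^ 2 + p.2 ^ 2)) : Integrable f pl := by
  have := h.isProb h0
  refine Integrable.mono' (g := fun p => K * (1 + p.1 ^ 2 + p.2 ^ 2)) ?_
    hf.aestronglyMeasurable (ae_of_all _ hK)
  exact (((integrable_const 1).add (h.integrable_sq_fst h0)).add
    (h.integrable_sq_snd h1)).const_mul K

lemma IsP2.integrable_of_bound {ρ : ℝ → ℝ} (hρ : IsP2 ρ) {f : ℝ → ℝ} (hf : Measurable f)
    (K : ℝ) (hK : ∀ x : ℝ, |f x| ≤ K * (1 + x ^ 2)) : Integrable (fun x => f x * ρ x) := by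
  have := hρ.isProb
  rw [← integrable_dens hρ]
  refine Integrable.mono' (g := fun p => K * (1 + p ^ 2)) ?_
    hf.aestronglyMeasurable (ae_of_all _ hK)
  exact ((integrable_const 1).add ((integrable_dens hρ _).2 hρ.2.2.2)).const_mul K

lemma W2sq_bdd (ρ₀ ρ₁ : ℝ → ℝ) : BddBelow {c : ℝ | ∃ pl : Measure (ℝ × ℝ), IsCoupling pl ρ₀ ρ₁ ∧
    c = ∫ p : ℝ × ℝ, (p.1 - p.2) ^ 2 ∂pl} := by
  refine ⟨0, ?_⟩
  rintro c ⟨pl, -, rfl⟩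
  exact integral_nonneg fun p => sq_nonneg _

lemma W2sq_le {pl : Measure (ℝ × ℝ)} {ρ₀ ρ₁ : ℝ → ℝ} (h : IsCoupling pl ρ₀ ρ₁) :
    W2sq ρ₀ ρ₁ ≤ ∫ p : ℝ × ℝ, (p.1 - p.2) ^ 2 ∂pl :=
  csInf_le (W2sq_bdd _ _) ⟨pl, h, rfl⟩

lemma exists_coupling_lt {ρ₀ ρ₁ : ℝ → ℝ} (h0 : IsP2 ρ₀) (h1 : IsP2 ρ₁) {ε : ℝ} (hε : 0 < ε) :
    ∃ pl : Measure (ℝ × ℝ), IsCoupling pl ρ₀ ρ₁ ∧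
      ∫ p : ℝ × ℝ, (p.1 - p.2) ^ 2 ∂pl < W2sq ρ₀ ρ₁ + ε := by
  have hne : {c : ℝ | ∃ pl : Measure (ℝ × ℝ), IsCoupling pl ρ₀ ρ₁ ∧
    c = ∫ p : ℝ × ℝ, (p.1 - p.2) ^ 2 ∂pl}.Nonempty := by
    have := h0.isProb
    have := h1.isProb
    refine ⟨_, (densMeasure ρ₀).prod (densMeasure ρ₁), ⟨?_, ?_⟩, rfl⟩
    · rw [Measure.map_fst_prod]; simp
    · rw [Measure.map_snd_prod]; simp
  obtain ⟨c, ⟨pl, hpl, rfl⟩, hlt⟩ := exists_lt_of_csInf_lt hne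
    (show sInf _ < W2sq ρ₀ ρ₁ + ε from lt_add_of_pos_right _ hε)
  exact ⟨pl, hpl, hlt⟩

lemma dens_of_ac (μ : Measure ℝ) [IsProbabilityMeasure μ] (hac : μ ≪ volume)
    (h2 : Integrable (fun x : ℝ => x ^ 2) μ) : ∃ f, IsP2 f ∧ densMeasure f = μ := by
  have hd : densMeasure (fun x => (μ.rnDeriv volume x).toReal) = μ := by
    unfold densMeasure
    conv_rhs => rw [← Measure.withDensity_rnDeriv_eq μ volume hac]
    refine withDensity_congr_ae ?_
    filter_upwards [μ.rnDeriv_lt_top volume] with x hx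
    exact ENNReal.ofReal_toReal hx.ne
  refine ⟨fun x => (μ.rnDeriv volume x).toReal, ⟨fun x => ENNReal.toReal_nonneg,
    Measure.integrable_toReal_rnDeriv, ?_, ?_⟩, hd⟩
  · rw [Measure.integral_toReal_rnDeriv hac]; simp
  · have hm : Measurable (fun x => ENNReal.ofReal (μ.rnDeriv volume x).toReal) :=
      (Measure.measurable_rnDeriv μ volume).ennreal_toReal.ennreal_ofReal
    rw [← hd] at h2
    unfold densMeasure at h2
    rw [integrable_withDensity_iff_integrable_smul' hm (by simp)] at h2
    refine h2.congr (ae_of_all _ fun x => ?_)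
    simp [mul_comm]

lemma taylor_upper {f f' f'' : ℝ → ℝ} (hf : ∀ x, HasDerivAt f (f' x) x)
    (hf' : ∀ x, HasDerivAt f' (f'' x) x) {K : ℝ} (hK : ∀ x, f'' x ≤ K) (a b : ℝ) :
    f b - f a - f' a * (b - a) ≤ K / 2 * (b - a) ^ 2 := by
  have h1 : ∀ x, HasDerivAt (fun x => K / 2 * x ^ 2 - f x) (K * x - f' x) x := fun x => by
    have := ((hasDerivAt_pow 2 x).const_mul (K / 2)).sub (hf x)
    convert! this using 1
    simp; ring
  have h2 : ∀ x, HasDerivAt (fun x => K * x - f' x) (K - f'' x) x := fun x => by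
    have := ((hasDerivAt_id x).const_mul K).sub (hf' x)
    convert! this using 1
    simp
  have hmono : Monotone (fun x => K * x - f' x) :=
    monotone_of_hasDerivAt_nonneg h2 fun x => by simpa using hK x
  have hd : deriv (fun x => K / 2 * x ^ 2 - f x) = fun x => K * x - f' x :=
    funext fun x => (h1 x).deriv
  have hc : ConvexOn ℝ Set.univ (fun x => K / 2 * x ^ 2 - f x) := by
    apply Monotone.convexOn_univ_of_deriv (fun x => (h1 x).differentiableAt)
    rw [hd]; exact hmono
  rcases lt_trichotomy a b with hab | hab | hab
  · have := hc.le_slope_of_hasDerivAt (Set.mem_univ a) (Set.mem_univ b) hab (h1 a)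
    rw [slope_def_field, le_div_iff₀ (by linarith)] at this
    nlinarith
  · subst hab; simp
  · have := hc.slope_le_of_hasDerivAt (Set.mem_univ b) (Set.mem_univ a) hab (h1 a)
    rw [slope_def_field, div_le_iff₀ (by linarith)] at this
    nlinarith

lemma taylor_abs {f f' f'' : ℝ → ℝ} (hf : ∀ x, HasDerivAt f (f' x) x)
    (hf' : ∀ x, HasDerivAt f' (f'' x) x) {K : ℝ} (hK : ∀ x, |f'' x| ≤ K) (a b : ℝ) :
    |f b - f a - f' a * (b - a)| ≤ K / 2 * (b - a) ^ 2 := by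
  have h1 := taylor_upper hf hf' (fun x => (abs_le.1 (hK x)).2) a b
  have h2 := taylor_upper (f := fun x => - f x) (f' := fun x => - f' x) (f'' := fun x => - f'' x)
    (fun x => (hf x).neg) (fun x => (hf' x).neg)
    (fun x => neg_le.1 (abs_le.1 (hK x)).1) a b
  rw [abs_le]
  constructor <;> linarith

lemma growth_derivs {H : ℝ → ℝ} {C : ℝ} (hH : GrowthAssumptions H C) :
    (∀ x, HasDerivAt H (deriv H x) x) ∧ (∀ x, HasDerivAt (deriv H) (deriv (deriv H) x) x) := by
  have h1 : ContDiff ℝ 2 (deriv H) := by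
    have : ContDiff ℝ (2 + 1) H := by
      have := hH.1
      norm_num; exact this
    exact (contDiff_succ_iff_deriv.1 this).2.2
  exact ⟨fun x => ((hH.1.differentiable (by norm_num)) x).hasDerivAt,
    fun x => ((h1.differentiable (by norm_num)) x).hasDerivAt⟩

lemma growth_H_int {H : ℝ → ℝ} {C : ℝ} (hH : GrowthAssumptions H C) {ρ : ℝ → ℝ} (hρ : IsP2 ρ) :
    Integrable (fun x => H x * ρ x) := by
  refine hρ.integrable_of_bound hH.1.continuous.measurable C fun x => ?_
  rw [abs_of_nonneg (hH.2.1 x), ← sq_abs]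
  exact hH.2.2.2.1 x

lemma growth_dH_int {H : ℝ → ℝ} {C : ℝ} (hH : GrowthAssumptions H C) {ρ : ℝ → ℝ} (hρ : IsP2 ρ) :
    Integrable (fun x => deriv H x * ρ x) := by
  refine hρ.integrable_of_bound (measurable_deriv H) (2 * C) fun x => ?_
  have := hH.2.2.2.2.1 x
  have hC := hH.2.2.1
  rw [← sq_abs]
  nlinarith [sq_nonneg (|x| - 1), mul_nonneg hC.le (sq_nonneg (|x| - 1))]


lemma integral_lin3 {α : Type*} [MeasurableSpace α] {μ : Measure α} {a b c : α → ℝ}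
    (ha : Integrable a μ) (hb : Integrable b μ) (hc : Integrable c μ) (s t : ℝ) :
    ∫ x, (a x + s * b x + t * c x) ∂μ = (∫ x, a x ∂μ) + s * (∫ x, b x ∂μ) + t * ∫ x, c x ∂μ := by
  have h1 : Integrable (fun x => a x + s * b x) μ := ha.add (hb.const_mul s)
  rw [integral_add h1 (hc.const_mul t), integral_add ha (hb.const_mul s), integral_const_mul,
    integral_const_mul]

lemma cov_integral {T T' : ℝ → ℝ} (hT : ∀ x, HasDerivAt T (T' x) x) (hpos : ∀ x, 0 < T' x)
    (hsurj : Function.Surjective T) (φ : ℝ → ℝ) :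
    ∫ y, φ y = ∫ x, T' x * φ (T x) := by
  have hinj : Function.Injective T := (strictMono_of_hasDerivAt_pos hT hpos).injective
  have := integral_image_eq_integral_abs_deriv_smul MeasurableSet.univ
    (fun x _ => (hT x).hasDerivWithinAt) hinj.injOn φ
  rw [Set.image_univ, hsurj.range_eq] at this
  simpa [abs_of_pos (hpos _)] using this

lemma cov_integrable {T T' : ℝ → ℝ} (hT : ∀ x, HasDerivAt T (T' x) x) (hpos : ∀ x, 0 < T' x)
    (hsurj : Function.Surjective T) (φ : ℝ → ℝ) :
    Integrable φ ↔ Integrable (fun x => T' x * φ (T x)) := by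
  have hinj : Function.Injective T := (strictMono_of_hasDerivAt_pos hT hpos).injective
  have := integrableOn_image_iff_integrableOn_abs_deriv_smul MeasurableSet.univ
    (fun x _ => (hT x).hasDerivWithinAt) hinj.injOn φ
  rw [Set.image_univ, hsurj.range_eq] at this
  simpa [abs_of_pos (hpos _)] using this

lemma push_density {ρ T T' : ℝ → ℝ} (hρ : IsP2 ρ) (hT : ∀ x, HasDerivAt T (T' x) x)
    (hpos : ∀ x, 0 < T' x) (hsurj : Function.Surjective T) {B : ℝ} (hB : ∀ x, |T x - x| ≤ B) :
    ∃ f : ℝ → ℝ, IsP2 f ∧ (∀ x, T' x * f (T x) = ρ x) ∧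
      densMeasure f = (densMeasure ρ).map T := by
  have hinj : Function.Injective T := (strictMono_of_hasDerivAt_pos hT hpos).injective
  have hTm : Measurable T :=
    (continuous_iff_continuousAt.2 fun x => (hT x).continuousAt).measurable
  let S := Function.surjInv hsurj
  have hS : ∀ x, S (T x) = x := fun x => hinj (Function.surjInv_eq hsurj (T x))
  let f : ℝ → ℝ := fun y => ρ (S y) / T' (S y)
  have hf : ∀ x, T' x * f (T x) = ρ x := fun x => by
    simp only [f, hS]
    field_simp [(hpos x).ne']
  have hf2 : IsP2 f := by
    refine ⟨fun x => div_nonneg (hρ.1 _) (hpos _).le, ?_, ?_, ?_⟩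
    · rw [cov_integrable hT hpos hsurj]; simpa only [hf] using hρ.2.1
    · rw [cov_integral hT hpos hsurj]; simpa only [hf] using hρ.2.2.1
    · rw [cov_integrable hT hpos hsurj]
      have : Integrable (fun x => (T x) ^ 2 * ρ x) := by
        refine hρ.integrable_of_bound (hTm.pow_const 2) (2 + 2 * B ^ 2) fun x => ?_
        rw [abs_of_nonneg (sq_nonneg _)]
        have h1 : (T x - x) ^ 2 ≤ B ^ 2 := sq_le_sq' (abs_le.1 (hB x)).1 (abs_le.1 (hB x)).2
        nlinarith [sq_nonneg (T x - x - x), mul_nonneg (sq_nonneg B) (sq_nonneg x)]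
      refine this.congr (ae_of_all _ fun x => ?_)
      simp only []
      rw [← hf x]; ring
  refine ⟨f, hf2, hf, ?_⟩
  ext A hA
  rw [Measure.map_apply hTm hA]
  unfold densMeasure
  rw [withDensity_apply _ hA, withDensity_apply _ (hTm hA)]
  have := lintegral_image_eq_lintegral_abs_deriv_mul (hTm hA)
    (fun x _ => (hT x).hasDerivWithinAt) hinj.injOn (fun y => ENNReal.ofReal (f y))
  rw [Set.image_preimage_eq _ hsurj] at this
  rw [this]
  refine lintegral_congr fun x => ?_
  rw [← ENNReal.ofReal_mul (abs_nonneg _), abs_of_pos (hpos x), hf]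

lemma push_entropy {ρ T T' f : ℝ → ℝ} (hT : ∀ x, HasDerivAt T (T' x) x)
    (hpos : ∀ x, 0 < T' x) (hsurj : Function.Surjective T)
    (hent : Integrable (fun x => ρ x * Real.log (ρ x)))
    (hlog : Integrable (fun x => Real.log (T' x) * ρ x))
    (hf : ∀ x, T' x * f (T x) = ρ x) :
    ∫ x, f x * Real.log (f x) = (∫ x, ρ x * Real.log (ρ x)) - ∫ x, Real.log (T' x) * ρ x := by
  rw [cov_integral hT hpos hsurj, ← integral_sub hent hlog]
  refine integral_congr_ae (ae_of_all _ fun x => ?_)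
  simp only []
  rcases eq_or_ne (f (T x)) 0 with h0 | h0
  · have : ρ x = 0 := by rw [← hf, h0, mul_zero]
    simp [h0, this]
  · rw [← hf x, Real.log_mul (hpos x).ne' h0]; ring

lemma log_lower {u : ℝ} (hu : |u| ≤ 1 / 2) : u - 2 * u ^ 2 ≤ Real.log (1 + u) := by
  have h1 := abs_le.1 hu
  have h2 : 0 < 1 + u := by linarith
  refine le_trans ?_ (Real.one_sub_inv_le_log_of_pos h2)
  have : 1 - (1 + u)⁻¹ = u / (1 + u) := by field_simp; ring
  rw [this, le_div_iff₀ h2]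
  nlinarith [mul_nonneg (sq_nonneg u) (by linarith : (0:ℝ) ≤ 1 + 2 * u)]

lemma EL_ineq {H : ℝ → ℝ} {C : ℝ} (hH : GrowthAssumptions H C) {h : ℝ} (hh : 0 < h)
    {ρ₀ ρ₁ : ℝ → ℝ} (h0 : IsP2 ρ₀) (h1 : IsP2 ρ₁)
    (hent : Integrable (fun x => ρ₁ x * Real.log (ρ₁ x)))
    (hmin : ∀ ρ ∈ Mset (M1 ρ₁), SchemeObjective H h ρ₀ ρ₁ ≤ SchemeObjective H h ρ₀ ρ)
    {g g' : ℝ → ℝ} (hg : ∀ x, HasDerivAt g (g' x) x) (hg'm : Measurable g')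
    {B K : ℝ} (hB : ∀ x, |g x| ≤ B) (hK : ∀ x, |g' x| ≤ K) (hmean : ∫ x, g x * ρ₁ x = 0)
    {ε : ℝ} {pl : Measure (ℝ × ℝ)} (hpl : IsCoupling pl ρ₀ ρ₁)
    (hε : ∫ p : ℝ × ℝ, (p.1 - p.2) ^ 2 ∂pl < W2sq ρ₀ ρ₁ + ε)
    {s : ℝ} (hs : |s| * K ≤ 1 / 2) :
    0 ≤ ε / 2 + s * ((∫ p : ℝ × ℝ, (p.2 - p.1) * g p.2 ∂pl) +
      h * ((∫ x, (deriv H x * g x) * ρ₁ x) - ∫ x, g' x * ρ₁ x)) +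
      (B ^ 2 / 2 + h * (C / 2 * B ^ 2 + 2 * K ^ 2)) * s ^ 2 := by
  have := hpl.isProb h0
  have hB0 : 0 ≤ B := (abs_nonneg _).trans (hB 0)
  have hK0 : 0 ≤ K := (abs_nonneg _).trans (hK 0)
  have hC := hH.2.2.1
  have hgc : Continuous g := continuous_iff_continuousAt.2 fun x => (hg x).continuousAt
  have hgm := hgc.measurable
  have hg2 : ∀ x, (g x) ^ 2 ≤ B ^ 2 := fun x => sq_le_sq' (abs_le.1 (hB x)).1 (abs_le.1 (hB x)).2
  have hsg' : ∀ x, |s * g' x| ≤ 1 / 2 := fun x => by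
    rw [abs_mul]
    exact (mul_le_mul_of_nonneg_left (hK x) (abs_nonneg s)).trans hs
  have hsg'2 : ∀ x, (s * g' x) ^ 2 ≤ K ^ 2 * s ^ 2 := fun x => by
    have : (g' x) ^ 2 ≤ K ^ 2 := sq_le_sq' (abs_le.1 (hK x)).1 (abs_le.1 (hK x)).2
    nlinarith [sq_nonneg s]
  let T : ℝ → ℝ := fun x => x + s * g x
  let T' : ℝ → ℝ := fun x => 1 + s * g' x
  have hT : ∀ x, HasDerivAt T (T' x) x := fun x => (hasDerivAt_id x).add ((hg x).const_mul s)
  have hpos : ∀ x, 0 < T' x := fun x => by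
    have := (abs_le.1 (hsg' x)).1
    simp only [T']; linarith
  have hTb : ∀ x, |T x - x| ≤ |s| * B := fun x => by
    simp only [T, add_sub_cancel_left, abs_mul]
    exact mul_le_mul_of_nonneg_left (hB x) (abs_nonneg s)
  have hTc : Continuous T := continuous_id.add (continuous_const.mul hgc)
  have hTm := hTc.measurable
  have hsurj : Function.Surjective T := by
    apply hTc.surjective
    · refine tendsto_atTop_mono (f := fun x => x + (- (|s| * B))) (fun x => ?_)
        (tendsto_atTop_add_const_right _ _ tendsto_id)
      have := (abs_le.1 (hTb x)).1
      linarith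
    · refine tendsto_atBot_mono (f := fun x => x + (|s| * B)) (fun x => ?_)
        (tendsto_atBot_add_const_right _ _ tendsto_id)
      have := (abs_le.1 (hTb x)).2
      linarith
  obtain ⟨f, hf2, hfT, hfd⟩ := push_density h1 hT hpos hsurj hTb
  -- integrability facts
  have habs : ∀ x : ℝ, |x| ≤ 1 + x ^ 2 := fun x => by
    rw [← sq_abs]; nlinarith [sq_nonneg (|x| - 1), abs_nonneg x]
  have hIx : Integrable (fun x => x * ρ₁ x) :=
    h1.integrable_of_bound measurable_id 1 fun x => by rw [one_mul]; exact habs x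
  have hIg : Integrable (fun x => g x * ρ₁ x) :=
    h1.integrable_of_bound hgm B fun x => (hB x).trans (by nlinarith [mul_nonneg hB0 (sq_nonneg x)])
  have hIg' : Integrable (fun x => g' x * ρ₁ x) :=
    h1.integrable_of_bound hg'm K fun x =>
      (hK x).trans (by nlinarith [mul_nonneg hK0 (sq_nonneg x)])
  have hIHg : Integrable (fun x => (deriv H x * g x) * ρ₁ x) :=
    h1.integrable_of_bound ((measurable_deriv H).mul hgm) (2 * C * B) fun x => by
      rw [abs_mul]
      have h3 := hH.2.2.2.2.1 x
      have h4 : |deriv H x| ≤ 2 * C * (1 + x ^ 2) := by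
        refine h3.trans ?_
        nlinarith [mul_nonneg hC.le (sq_nonneg x), mul_le_mul_of_nonneg_left (habs x) hC.le]
      calc |deriv H x| * |g x| ≤ (2 * C * (1 + x ^ 2)) * B :=
            mul_le_mul h4 (hB x) (abs_nonneg _) (by positivity)
        _ = _ := by ring
  have hIlog : Integrable (fun x => Real.log (T' x) * ρ₁ x) := by
    refine h1.integrable_of_bound (Real.measurable_log.comp ((hg'm.const_mul s).const_add 1)) 1
      fun x => ?_
    have h3 := log_lower (hsg' x)
    have h4 := Real.log_le_sub_one_of_pos (hpos x)
    have h5 := abs_le.1 (hsg' x)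
    have h6 : |Real.log (T' x)| ≤ 1 := by
      rw [abs_le]
      simp only [T'] at h4 ⊢
      constructor <;> nlinarith
    nlinarith [sq_nonneg x]
  -- mean
  have hM : M1 f = M1 ρ₁ := by
    unfold M1
    rw [cov_integral hT hpos hsurj]
    have : ∀ x, T' x * (T x * f (T x)) = x * ρ₁ x + s * (g x * ρ₁ x) := fun x => by
      rw [← hfT x]; simp only [T]; ring
    simp only [this]
    rw [integral_add hIx (hIg.const_mul s), integral_const_mul, hmean]
    simp
  have hobj := hmin f ⟨hf2, hM⟩
  -- Wasserstein part
  have hcoup : IsCoupling (pl.map (fun p => (p.1, T p.2))) ρ₀ f := by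
    have hm : Measurable (fun p : ℝ × ℝ => (p.1, T p.2)) :=
      measurable_fst.prodMk (hTm.comp measurable_snd)
    constructor
    · rw [Measure.map_map measurable_fst hm, ← hpl.1]; rfl
    · rw [Measure.map_map measurable_snd hm, hfd, ← hpl.2, Measure.map_map hTm measurable_snd]; rfl
  have hIsq : Integrable (fun p : ℝ × ℝ => (p.1 - p.2) ^ 2) pl :=
    hpl.integrable_of_bound h0 h1 (by fun_prop) 2 fun p => by
      rw [abs_of_nonneg (sq_nonneg _)]; nlinarith [sq_nonneg (p.1 + p.2)]
  have hIc : Integrable (fun p : ℝ × ℝ => (p.2 - p.1) * g p.2) pl :=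
    hpl.integrable_of_bound h0 h1 (by fun_prop) (2 * B) fun p => by
      rw [abs_mul]
      have : |p.2 - p.1| ≤ 2 * (1 + p.1 ^ 2 + p.2 ^ 2) := by
        refine (abs_sub _ _).trans ?_
        nlinarith [habs p.1, habs p.2, sq_nonneg p.1, sq_nonneg p.2]
      calc |p.2 - p.1| * |g p.2| ≤ (2 * (1 + p.1 ^ 2 + p.2 ^ 2)) * B :=
            mul_le_mul this (hB _) (abs_nonneg _) (by positivity)
        _ = _ := by ring
  have hW : W2sq ρ₀ f ≤ (∫ p : ℝ × ℝ, (p.1 - p.2) ^ 2 ∂pl) +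
      2 * s * (∫ p : ℝ × ℝ, (p.2 - p.1) * g p.2 ∂pl) + B ^ 2 * s ^ 2 := by
    refine (W2sq_le hcoup).trans ?_
    rw [integral_map (by fun_prop) (by fun_prop)]
    have : ∫ p : ℝ × ℝ, ((p.1 - p.2) ^ 2 + 2 * s * ((p.2 - p.1) * g p.2) + B ^ 2 * s ^ 2) ∂pl =
      (∫ p : ℝ × ℝ, (p.1 - p.2) ^ 2 ∂pl) +
      2 * s * (∫ p : ℝ × ℝ, (p.2 - p.1) * g p.2 ∂pl) + B ^ 2 * s ^ 2 := by
      simpa using integral_lin3 hIsq hIc (integrable_const 1) (2 * s) (B ^ 2 * s ^ 2)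
    rw [← this]
    refine integral_mono_of_nonneg (ae_of_all _ fun p => sq_nonneg _)
      ((hIsq.add (hIc.const_mul _)).add (integrable_const _)) (ae_of_all _ fun p => ?_)
    simp only [T]
    nlinarith [mul_le_mul_of_nonneg_right (hg2 p.2) (sq_nonneg s)]
  -- potential part
  obtain ⟨hdH, hddH⟩ := growth_derivs hH
  have hP : ∫ x, H x * f x ≤ (∫ x, H x * ρ₁ x) + s * (∫ x, (deriv H x * g x) * ρ₁ x) +
      C / 2 * B ^ 2 * s ^ 2 := by
    have hI2 := growth_H_int hH hf2
    rw [cov_integrable hT hpos hsurj] at hI2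
    rw [cov_integral hT hpos hsurj]
    have : ∫ x, (H x * ρ₁ x + s * ((deriv H x * g x) * ρ₁ x) + C / 2 * B ^ 2 * s ^ 2 * ρ₁ x) =
        (∫ x, H x * ρ₁ x) + s * (∫ x, (deriv H x * g x) * ρ₁ x) +
          C / 2 * B ^ 2 * s ^ 2 := by
      rw [integral_lin3 (growth_H_int hH h1) hIHg h1.2.1, h1.2.2.1, mul_one]
    rw [← this]
    refine integral_mono hI2 (((growth_H_int hH h1).add (hIHg.const_mul _)).add
      (h1.2.1.const_mul _)) fun x => ?_
    have h3 := (abs_le.1 (taylor_abs hdH hddH hH.2.2.2.2.2.1 x (T x))).2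
    have h4 : T x - x = s * g x := by simp [T]
    rw [h4] at h3
    have h5 : H (T x) ≤ H x + s * (deriv H x * g x) + C / 2 * B ^ 2 * s ^ 2 := by
      have : C / 2 * (s * g x) ^ 2 ≤ C / 2 * B ^ 2 * s ^ 2 := by
        have := mul_le_mul_of_nonneg_left (mul_le_mul_of_nonneg_right (hg2 x) (sq_nonneg s))
          (by positivity : 0 ≤ C / 2)
        nlinarith
      linarith
    have h6 := mul_le_mul_of_nonneg_right h5 (h1.1 x)
    calc T' x * (H (T x) * f (T x)) = H (T x) * ρ₁ x := by rw [← hfT x]; ring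
      _ ≤ _ := h6
      _ = _ := by ring
  -- entropy part
  have hE : ∫ x, f x * Real.log (f x) ≤ (∫ x, ρ₁ x * Real.log (ρ₁ x)) - s * (∫ x, g' x * ρ₁ x) +
      2 * K ^ 2 * s ^ 2 := by
    rw [push_entropy hT hpos hsurj hent hIlog hfT]
    have : ∫ x, (s * (g' x * ρ₁ x) - 2 * K ^ 2 * s ^ 2 * ρ₁ x) =
        s * (∫ x, g' x * ρ₁ x) - 2 * K ^ 2 * s ^ 2 := by
      rw [integral_sub (hIg'.const_mul _) (h1.2.1.const_mul _), integral_const_mul,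
        integral_const_mul, h1.2.2.1, mul_one]
    have h2 : ∫ x, (s * (g' x * ρ₁ x) - 2 * K ^ 2 * s ^ 2 * ρ₁ x) ≤
        ∫ x, Real.log (T' x) * ρ₁ x := by
      refine integral_mono ((hIg'.const_mul _).sub (h1.2.1.const_mul _)) hIlog fun x => ?_
      have h3 := log_lower (hsg' x)
      have h4 := hsg'2 x
      have h5 : s * g' x - 2 * K ^ 2 * s ^ 2 ≤ Real.log (T' x) := by
        simp only [T']; linarith
      have h6 := mul_le_mul_of_nonneg_right h5 (h1.1 x)
      calc _ = (s * g' x - 2 * K ^ 2 * s ^ 2) * ρ₁ x := by ring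
        _ ≤ _ := h6
    linarith
  unfold SchemeObjective FreeEnergy at hobj
  have h7 := mul_le_mul_of_nonneg_left hP hh.le
  have h8 := mul_le_mul_of_nonneg_left hE hh.le
  nlinarith

lemma EL_abs {X M ε : ℝ} (hε : 0 < ε)
    (h1 : 0 ≤ ε / 2 + Real.sqrt ε * X + M * (Real.sqrt ε) ^ 2)
    (h2 : 0 ≤ ε / 2 + (-Real.sqrt ε) * X + M * (-Real.sqrt ε) ^ 2) :
    |X| ≤ (1 / 2 + M) * Real.sqrt ε := by
  have hr : 0 < Real.sqrt ε := Real.sqrt_pos.2 hε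
  have he : ε = Real.sqrt ε ^ 2 := (Real.sq_sqrt hε.le).symm
  set r := Real.sqrt ε
  rw [he] at h1 h2
  rw [abs_le]
  constructor
  · have : 0 ≤ r * ((1 / 2 + M) * r + X) := by nlinarith
    have := nonneg_of_mul_nonneg_right this hr
    linarith
  · have : 0 ≤ r * ((1 / 2 + M) * r - X) := by nlinarith
    have := nonneg_of_mul_nonneg_right this hr
    linarith


lemma entropy_integrable_of_pos {ρ : ℝ → ℝ} (hρ : IsP2 ρ)
    (hfin : ∫⁻ x, ENNReal.ofReal (ρ x * Real.log (ρ x)) ≠ ⊤) :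
    Integrable (fun x => ρ x * Real.log (ρ x)) := by
  have hm : AEStronglyMeasurable (fun x => ρ x * Real.log (ρ x)) :=
    (hρ.2.1.aestronglyMeasurable.aemeasurable.mul
      (Real.measurable_log.comp_aemeasurable
        hρ.2.1.aestronglyMeasurable.aemeasurable)).aestronglyMeasurable
  have hpos : Integrable (fun x => (ENNReal.ofReal (ρ x * Real.log (ρ x))).toReal) :=
    integrable_toReal_of_lintegral_ne_top hm.aemeasurable.ennreal_ofReal hfin
  have hgauss : Integrable (fun x : ℝ => 2 * Real.exp (-(1 / 2) * x ^ 2)) :=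
    (integrable_exp_neg_mul_sq (by norm_num)).const_mul 2
  refine Integrable.mono' ((hpos.add hρ.2.2.2).add hgauss) hm (ae_of_all _ fun x => ?_)
  simp only [Pi.add_apply, Real.norm_eq_abs, ENNReal.toReal_ofReal']
  have h0 := hρ.1 x
  have hx2 : 0 ≤ x ^ 2 * ρ x := mul_nonneg (sq_nonneg x) h0
  have hg : 0 ≤ 2 * Real.exp (-(1 / 2) * x ^ 2) := by positivity
  rcases le_total 0 (ρ x * Real.log (ρ x)) with hl | hl
  · rw [abs_of_nonneg hl, max_eq_left hl]; linarith
  rw [abs_of_nonpos hl, max_eq_right hl]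
  rcases h0.eq_or_lt with hz | hp
  · rw [← hz]; simp; positivity
  rcases le_total (Real.exp (-x ^ 2)) (ρ x) with hc | hc
  · have h2 : -x ^ 2 ≤ Real.log (ρ x) := (Real.le_log_iff_exp_le hp).2 hc
    nlinarith
  · have hs : 0 < Real.sqrt (ρ x) := Real.sqrt_pos.2 hp
    have h1 : Real.sqrt (ρ x) ≤ Real.exp (-(1 / 2) * x ^ 2) := by
      rw [Real.sqrt_le_left (by positivity), ← Real.exp_nat_mul]
      refine hc.trans (le_of_eq ?_)
      congr 1; push_cast; ring
    have h2 := Real.one_sub_inv_le_log_of_pos hs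
    have h3 : Real.log (Real.sqrt (ρ x)) = Real.log (ρ x) / 2 := Real.log_sqrt h0
    have h4 : ρ x = Real.sqrt (ρ x) * Real.sqrt (ρ x) := (Real.mul_self_sqrt h0).symm
    have h5 : - Real.log (ρ x) ≤ 2 * (Real.sqrt (ρ x))⁻¹ := by
      rw [h3] at h2; linarith
    have h6 : ρ x * (- Real.log (ρ x)) ≤ 2 * Real.sqrt (ρ x) := by
      calc ρ x * (- Real.log (ρ x)) ≤ ρ x * (2 * (Real.sqrt (ρ x))⁻¹) :=
            mul_le_mul_of_nonneg_left h5 h0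
        _ = 2 * (Real.sqrt (ρ x) * Real.sqrt (ρ x) * (Real.sqrt (ρ x))⁻¹) := by
            rw [← h4]; ring
        _ = 2 * Real.sqrt (ρ x) := by field_simp
    linarith

lemma layer_div {c b : ℝ} (hc : 0 ≤ c) (hb : 1 ≤ b) :
    ∫⁻ t in Set.Ioc 1 b, ENNReal.ofReal (c / t) = ENNReal.ofReal (c * Real.log b) := by
  have hI : IntegrableOn (fun t : ℝ => c / t) (Set.Ioc 1 b) := by
    rw [← intervalIntegrable_iff_integrableOn_Ioc_of_le hb]
    refine ContinuousOn.intervalIntegrable ?_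
    rw [Set.uIcc_of_le hb]
    refine continuousOn_const.div continuousOn_id fun t ht => ?_
    have := ht.1
    linarith
  rw [← ofReal_integral_eq_lintegral_ofReal hI]
  · rw [← intervalIntegral.integral_of_le hb]
    have : ∀ t : ℝ, c / t = c * (1 / t) := fun t => by ring
    simp only [this]
    rw [intervalIntegral.integral_const_mul, integral_one_div_of_pos one_pos (by linarith)]
    simp
  · filter_upwards [ae_restrict_mem measurableSet_Ioc] with t ht
    exact div_nonneg hc (by linarith [ht.1])

lemma layer_lower {x : ℝ} (hx : 0 ≤ x) :
    ENNReal.ofReal (x * Real.log x - x) ≤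
      ∫⁻ t in Set.Ioi (1:ℝ), ENNReal.ofReal ((x - t) / t) := by
  rcases le_total x 1 with h1 | h1
  · have : x * Real.log x - x ≤ 0 := by
      have := mul_nonpos_of_nonneg_of_nonpos hx (Real.log_nonpos hx h1)
      linarith
    rw [ENNReal.ofReal_of_nonpos this]; exact bot_le
  · have h2 : ENNReal.ofReal (x * Real.log x) ≤
        (∫⁻ t in Set.Ioi (1:ℝ), ENNReal.ofReal ((x - t) / t)) + ENNReal.ofReal x := by
      rw [← layer_div hx h1]
      calc ∫⁻ t in Set.Ioc 1 x, ENNReal.ofReal (x / t)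
          ≤ ∫⁻ t in Set.Ioc 1 x, (ENNReal.ofReal ((x - t) / t) + 1) := by
            refine setLIntegral_mono' measurableSet_Ioc fun t ht => ?_
            have ht0 : (0:ℝ) < t := by linarith [ht.1]
            rw [← ENNReal.ofReal_one, ← ENNReal.ofReal_add
              (div_nonneg (by linarith [ht.2]) ht0.le) zero_le_one]
            refine ENNReal.ofReal_le_ofReal (le_of_eq ?_)
            field_simp; ring
        _ = (∫⁻ t in Set.Ioc 1 x, ENNReal.ofReal ((x - t) / t)) + ENNReal.ofReal (x - 1) := by
            rw [lintegral_add_right _ measurable_const]; simp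
        _ ≤ _ := by
            refine add_le_add (lintegral_mono_set Set.Ioc_subset_Ioi_self) ?_
            exact ENNReal.ofReal_le_ofReal (by linarith)
    rw [ENNReal.ofReal_sub _ hx]
    exact tsub_le_iff_right.2 h2

lemma layer_upper {x Λ : ℝ} (hx : 0 ≤ x) (hΛ : 0 < Λ) :
    ∫⁻ t in Set.Ioi (1:ℝ), ENNReal.ofReal ((x - t / Λ) / t) ≤
      ENNReal.ofReal (|x * Real.log x| + |Real.log Λ| * x) := by
  have hz : ∀ t, 1 < t → Λ * x < t → ENNReal.ofReal ((x - t / Λ) / t) = 0 := fun t h1 h2 => by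
    apply ENNReal.ofReal_of_nonpos
    refine div_nonpos_of_nonpos_of_nonneg ?_ (by linarith)
    have : x < t / Λ := by rw [lt_div_iff₀ hΛ]; linarith
    linarith
  rcases le_total (Λ * x) 1 with h1 | h1
  · have : ∫⁻ t in Set.Ioi (1:ℝ), ENNReal.ofReal ((x - t / Λ) / t) = 0 := by
      rw [setLIntegral_congr_fun measurableSet_Ioi
        (g := fun _ => 0) (fun t ht => hz t ht (lt_of_le_of_lt h1 ht))]
      simp
    rw [this]; exact bot_le
  · have hx0 : 0 < x := by
      rcases hx.eq_or_lt with h | h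
      · rw [← h] at h1; simp at h1; linarith
      · exact h
    have h2 : ∫⁻ t in Set.Ioi (1:ℝ), ENNReal.ofReal ((x - t / Λ) / t) ≤
        ∫⁻ t in Set.Ioc 1 (Λ * x), ENNReal.ofReal (x / t) := by
      rw [← lintegral_indicator measurableSet_Ioi, ← lintegral_indicator measurableSet_Ioc]
      refine lintegral_mono fun t => ?_
      by_cases ht : 1 < t
      · by_cases ht2 : t ≤ Λ * x
        · rw [Set.indicator_of_mem (show t ∈ Set.Ioi 1 from ht),
            Set.indicator_of_mem (show t ∈ Set.Ioc 1 (Λ * x) from ⟨ht, ht2⟩)]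
          refine ENNReal.ofReal_le_ofReal (div_le_div_of_nonneg_right ?_ (by linarith))
          have : 0 ≤ t / Λ := div_nonneg (by linarith) hΛ.le
          linarith
        · rw [Set.indicator_of_mem (show t ∈ Set.Ioi 1 from ht), hz t ht (not_le.1 ht2)]
          exact bot_le
      · rw [Set.indicator_of_notMem (show t ∉ Set.Ioi 1 from ht)]
        exact bot_le
    refine h2.trans ?_
    rw [layer_div hx h1]
    refine ENNReal.ofReal_le_ofReal ?_
    rw [Real.log_mul hΛ.ne' hx0.ne']
    nlinarith [le_abs_self (x * Real.log x), mul_le_mul_of_nonneg_right (le_abs_self (Real.log Λ)) hx]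

lemma level_ineq {ρ ρ₀ G : ℝ → ℝ} (hρm : Measurable ρ)
    (hfin : ∫⁻ x, ENNReal.ofReal (ρ x) ≠ ⊤)
    {Λ : NNReal} (hΛ : 0 < Λ) (hG : LipschitzWith Λ G)
    (hmap : (densMeasure ρ).map G = densMeasure ρ₀) {t : ℝ} (ht : 0 < t) :
    ∫⁻ x, ENNReal.ofReal (ρ x - t) ≤ ∫⁻ x, ENNReal.ofReal (ρ₀ x - t / Λ) := by
  set A := {x | t < ρ x} with hA
  have hAm : MeasurableSet A := measurableSet_lt measurable_const hρm
  set B := toMeasurable volume (G '' A)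
  have hBm : MeasurableSet B := measurableSet_toMeasurable _ _
  have hΛ' : (0:ℝ) < Λ := hΛ
  have hvolB : volume B ≤ Λ * volume A := by
    rw [measure_toMeasurable]
    have := hG.hausdorffMeasure_image_le (d := 1) zero_le_one A
    rw [hausdorffMeasure_real] at this
    simpa using this
  have h1 : ∫⁻ x, ENNReal.ofReal (ρ x - t) = ∫⁻ x in A, ENNReal.ofReal (ρ x - t) := by
    rw [← lintegral_indicator hAm]
    refine lintegral_congr fun x => ?_
    by_cases hx : x ∈ A
    · rw [Set.indicator_of_mem hx]
    · rw [Set.indicator_of_notMem hx]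
      exact ENNReal.ofReal_of_nonpos (by simpa [hA] using hx)
  have h2 : (∫⁻ x in A, ENNReal.ofReal (ρ x - t)) + ENNReal.ofReal t * volume A =
      ∫⁻ x in A, ENNReal.ofReal (ρ x) := by
    rw [← setLIntegral_const, ← lintegral_add_right _ measurable_const]
    refine setLIntegral_congr_fun hAm fun x hx => ?_
    have hx' : t < ρ x := hx
    rw [← ENNReal.ofReal_add (by linarith) ht.le]
    simp
  have hmuA : ∫⁻ x in A, ENNReal.ofReal (ρ x) ≠ ⊤ :=
    ((setLIntegral_le_lintegral _ _).trans_lt hfin.lt_top).ne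
  have htA : ENNReal.ofReal t * volume A ≠ ⊤ := by
    refine ne_top_of_le_ne_top hmuA ?_
    rw [← h2]; exact le_add_self
  have h3 : ∫⁻ x in A, ENNReal.ofReal (ρ x) ≤ ∫⁻ x in B, ENNReal.ofReal (ρ₀ x) := by
    have e1 : ∫⁻ x in A, ENNReal.ofReal (ρ x) = densMeasure ρ A := by
      unfold densMeasure; rw [withDensity_apply _ hAm]
    have e2 : ∫⁻ x in B, ENNReal.ofReal (ρ₀ x) = densMeasure ρ₀ B := by
      unfold densMeasure; rw [withDensity_apply _ hBm]
    rw [e1, e2, ← hmap, Measure.map_apply hG.continuous.measurable hBm]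
    refine measure_mono fun x hx => ?_
    exact subset_toMeasurable _ _ ⟨x, hx, rfl⟩
  have h4 : ∫⁻ x in B, ENNReal.ofReal (ρ₀ x) ≤
      (∫⁻ x, ENNReal.ofReal (ρ₀ x - t / Λ)) + ENNReal.ofReal t * volume A := by
    calc ∫⁻ x in B, ENNReal.ofReal (ρ₀ x)
        ≤ ∫⁻ x in B, (ENNReal.ofReal (ρ₀ x - t / Λ) + ENNReal.ofReal (t / Λ)) := by
          refine lintegral_mono fun x => ?_
          refine le_trans ?_ ENNReal.ofReal_add_le
          simp
      _ = (∫⁻ x in B, ENNReal.ofReal (ρ₀ x - t / Λ)) + ENNReal.ofReal (t / Λ) * volume B := by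
          rw [lintegral_add_right _ measurable_const, setLIntegral_const]
      _ ≤ _ := by
          refine add_le_add (setLIntegral_le_lintegral _ _) ?_
          calc ENNReal.ofReal (t / Λ) * volume B ≤ ENNReal.ofReal (t / Λ) * (Λ * volume A) := by
                gcongr
            _ = ENNReal.ofReal t * volume A := by
                rw [← mul_assoc]
                congr 1
                rw [← ENNReal.ofReal_coe_nnreal, ← ENNReal.ofReal_mul (by positivity)]
                congr 1
                field_simp
  rw [h1]
  have h5 := h2.le.trans (h3.trans h4)
  exact (ENNReal.add_le_add_iff_right htA).1 h5

lemma entropy_push {ρ ρ₀ G : ℝ → ℝ} (hρm : Measurable ρ) (hρ : ∀ x, 0 ≤ ρ x)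
    (hfin : ∫⁻ x, ENNReal.ofReal (ρ x) ≠ ⊤) (h0 : IsP2 ρ₀)
    {Λ : NNReal} (hΛ : 0 < Λ) (hG : LipschitzWith Λ G)
    (hmap : (densMeasure ρ).map G = densMeasure ρ₀)
    (hent : Integrable (fun x => ρ₀ x * Real.log (ρ₀ x))) :
    ∫⁻ x, ENNReal.ofReal (ρ x * Real.log (ρ x)) ≠ ⊤ := by
  have hΛ' : (0:ℝ) < Λ := hΛ
  have h0m := h0.2.1.aestronglyMeasurable.aemeasurable
  have key : ∫⁻ x, ENNReal.ofReal (ρ x * Real.log (ρ x) - ρ x) ≤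
      ∫⁻ x, ENNReal.ofReal (|ρ₀ x * Real.log (ρ₀ x)| + |Real.log Λ| * ρ₀ x) := by
    have split : ∀ a t : ℝ, 1 < t →
        ENNReal.ofReal (a / t) = ENNReal.ofReal (t⁻¹) * ENNReal.ofReal a := fun a t ht => by
      rw [← ENNReal.ofReal_mul (by positivity)]; congr 1; ring
    calc ∫⁻ x, ENNReal.ofReal (ρ x * Real.log (ρ x) - ρ x)
        ≤ ∫⁻ x, ∫⁻ t in Set.Ioi (1:ℝ), ENNReal.ofReal ((ρ x - t) / t) :=
          lintegral_mono fun x => layer_lower (hρ x)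
      _ = ∫⁻ t in Set.Ioi (1:ℝ), ∫⁻ x, ENNReal.ofReal ((ρ x - t) / t) := by
          refine lintegral_lintegral_swap ?_
          refine Measurable.aemeasurable ?_
          simp only [Function.uncurry_def]
          fun_prop
      _ ≤ ∫⁻ t in Set.Ioi (1:ℝ), ∫⁻ x, ENNReal.ofReal ((ρ₀ x - t / Λ) / t) := by
          refine setLIntegral_mono' measurableSet_Ioi fun t ht => ?_
          have ht1 : (1:ℝ) < t := ht
          simp only [split _ t ht1]
          rw [lintegral_const_mul' _ _ ENNReal.ofReal_ne_top,
            lintegral_const_mul' _ _ ENNReal.ofReal_ne_top]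
          exact mul_le_mul' le_rfl (level_ineq hρm hfin hΛ hG hmap (by linarith))
      _ = ∫⁻ x, ∫⁻ t in Set.Ioi (1:ℝ), ENNReal.ofReal ((ρ₀ x - t / Λ) / t) := by
          refine (lintegral_lintegral_swap ?_).symm
          simp only [Function.uncurry_def]
          have hf : AEMeasurable (fun p : ℝ × ℝ => ρ₀ p.1)
              ((volume : Measure ℝ).prod (volume.restrict (Set.Ioi (1:ℝ)))) :=
            h0m.comp_fst
          have hs : Measurable (fun p : ℝ × ℝ => p.2) := measurable_snd
          exact ((hf.sub (hs.div_const _).aemeasurable).div hs.aemeasurable).ennreal_ofReal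
      _ ≤ _ := lintegral_mono fun x => layer_upper (h0.1 x) hΛ'
  have hI : Integrable (fun x => |ρ₀ x * Real.log (ρ₀ x)| + |Real.log Λ| * ρ₀ x) :=
    hent.abs.add (h0.2.1.const_mul _)
  have hlt : ∫⁻ x, ENNReal.ofReal (ρ x * Real.log (ρ x) - ρ x) ≠ ⊤ :=
    ne_top_of_le_ne_top hI.lintegral_lt_top.ne key
  refine ne_top_of_le_ne_top (ENNReal.add_ne_top.2 ⟨hlt, hfin⟩) ?_
  rw [← lintegral_add_right _ hρm.ennreal_ofReal]
  refine lintegral_mono fun x => le_trans ?_ ENNReal.ofReal_add_le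
  simp

lemma measure_eq_of_lip {μ ν : Measure ℝ} [IsProbabilityMeasure μ] [IsProbabilityMeasure ν]
    (hf : ∀ (f : ℝ → ℝ) (k : NNReal), LipschitzWith k f → (∀ x, 0 ≤ f x) → (∀ x, f x ≤ 1) →
      ∫ x, f x ∂μ = ∫ x, f x ∂ν) : μ = ν := by
  refine ext_of_generate_finite _ ?_ isPiSystem_isClosed ?_ (by simp)
  · rw [borel_eq_generateFrom_isClosed.symm]; exact BorelSpace.measurable_eq
  · intro F hF
    obtain ⟨u, -, hu0, hu⟩ := exists_seq_strictAnti_tendsto (0 : ℝ)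
    have t1 := tendsto_integral_thickenedIndicator_of_isClosed μ hF hu0 hu
    have t2 := tendsto_integral_thickenedIndicator_of_isClosed ν hF hu0 hu
    have e : ∀ n, ∫ x, (thickenedIndicator (hu0 n) F x : ℝ) ∂μ =
        ∫ x, (thickenedIndicator (hu0 n) F x : ℝ) ∂ν := fun n => by
      refine hf _ (u n).toNNReal⁻¹ ?_ (fun x => NNReal.coe_nonneg _) (fun x => ?_)
      · exact lipschitzWith_thickenedIndicator (hu0 n) F
      · exact_mod_cast thickenedIndicator_le_one (hu0 n) F x
    simp only [e] at t1
    have := tendsto_nhds_unique t1 t2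
    rwa [measureReal_eq_measureReal_iff] at this


lemma quant_bounds {δ : ℝ} (hδ : 0 < δ) (x : ℝ) :
    0 ≤ x - δ * (⌊x / δ⌋ : ℝ) ∧ x - δ * (⌊x / δ⌋ : ℝ) ≤ δ := by
  have h1 := Int.floor_le (x / δ)
  have h2 := (Int.lt_floor_add_one (x / δ)).le
  rw [le_div_iff₀ hδ] at h1
  rw [div_le_iff₀ hδ] at h2
  constructor <;> nlinarith

/-- Half-half mixture of two densities. -/
lemma mix_isP2 {f ρ : ℝ → ℝ} (hf : IsP2 f) (hρ : IsP2 ρ) : IsP2 (fun x => (f x + ρ x) / 2) := by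
  refine ⟨fun x => div_nonneg (add_nonneg (hf.1 x) (hρ.1 x)) (by norm_num),
    (hf.2.1.add hρ.2.1).div_const 2, ?_, ?_⟩
  · rw [integral_div, integral_add hf.2.1 hρ.2.1, hf.2.2.1, hρ.2.2.1]; norm_num
  · refine ((hf.2.2.2.add hρ.2.2.2).div_const 2).congr (ae_of_all _ fun x => ?_)
    simp only [Pi.add_apply]; ring

lemma mix_int {f ρ φ : ℝ → ℝ} (h1 : Integrable (fun x => φ x * f x))
    (h2 : Integrable (fun x => φ x * ρ x)) :
    ∫ x, φ x * ((f x + ρ x) / 2) = ((∫ x, φ x * f x) + ∫ x, φ x * ρ x) / 2 := by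
  rw [← integral_add h1 h2, ← integral_div]
  congr 1; ext x; ring

lemma mix_dens {f ρ : ℝ → ℝ} (hf : IsP2 f) (hρ : IsP2 ρ) :
    densMeasure (fun x => (f x + ρ x) / 2) =
      (2⁻¹ : ENNReal) • densMeasure f + (2⁻¹ : ENNReal) • densMeasure ρ := by
  ext A hA
  unfold densMeasure
  simp only [Measure.add_apply, Measure.smul_apply, smul_eq_mul]
  rw [withDensity_apply _ hA, withDensity_apply _ hA, withDensity_apply _ hA, ← mul_add,
    ← lintegral_add_right' _ hρ.aem.restrict, ← lintegral_const_mul' _ _ (by simp)]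
  refine lintegral_congr fun x => ?_
  rw [← ENNReal.ofReal_add (hf.1 x) (hρ.1 x), div_eq_inv_mul, ENNReal.ofReal_mul (by norm_num),
    ENNReal.ofReal_inv_of_pos (by norm_num)]
  simp

lemma mix_entropy {f ρ : ℝ → ℝ} (hf : IsP2 f) (hρ : IsP2 ρ)
    (hn : ¬ Integrable (fun x => ρ x * Real.log (ρ x))) :
    ¬ Integrable (fun x => ((f x + ρ x) / 2) * Real.log ((f x + ρ x) / 2)) := by
  intro hI
  apply hn
  apply entropy_integrable_of_pos hρ
  have hI2 : Integrable (fun x => 2 * |((f x + ρ x) / 2) * Real.log ((f x + ρ x) / 2)| +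
      2 * Real.log 2 * ((f x + ρ x) / 2)) :=
    (hI.abs.const_mul 2).add ((mix_isP2 hf hρ).2.1.const_mul _)
  refine ne_top_of_le_ne_top hI2.lintegral_lt_top.ne (lintegral_mono fun x => ?_)
  refine ENNReal.ofReal_le_ofReal ?_
  set r := (f x + ρ x) / 2 with hr
  have hfx := hf.1 x
  have hx := hρ.1 x
  have hr0 : 0 ≤ r := by positivity
  have hl2 : 0 < Real.log 2 := Real.log_pos (by norm_num)
  rcases le_total (ρ x) 1 with h1 | h1
  · have := mul_nonpos_of_nonneg_of_nonpos hx (Real.log_nonpos hx h1)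
    have h3 : 0 ≤ 2 * |r * Real.log r| + 2 * Real.log 2 * r := by positivity
    linarith
  · have h2 : ρ x ≤ 2 * r := by rw [hr]; linarith
    have hrp : 0 < r := by linarith
    have h3 : Real.log (ρ x) ≤ Real.log 2 + Real.log r := by
      rw [← Real.log_mul (by norm_num) hrp.ne']
      exact Real.log_le_log (by linarith) h2
    have h4 := Real.log_nonneg h1
    have h5 : ρ x * Real.log (ρ x) ≤ 2 * r * (Real.log 2 + Real.log r) :=
      mul_le_mul h2 h3 h4 (by positivity)
    nlinarith [le_abs_self (r * Real.log r)]

lemma grad_step_estimate {H : ℝ → ℝ} {C : ℝ} (hH : GrowthAssumptions H C) {h : ℝ} (hh : 0 < h)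
    {lam s : ℝ} (hs : s * (1 + h * C) = 1 / 2) (hs0 : 0 < s) {δ : ℝ} (x y e : ℝ) (he : |e| ≤ δ)
    {D : ℝ} (hD : D = y + h * deriv H y - lam - x) {y' : ℝ} (hy' : y' = y - s * D + s * e) :
    (x - y') ^ 2 / 2 + h * H y' ≤ (x - y) ^ 2 / 2 + h * H y + lam * (y' - y) - s / 4 * D ^ 2
      + s / 2 * δ ^ 2 := by
  obtain ⟨hdH, hddH⟩ := growth_derivs hH
  have h3 := (abs_le.1 (taylor_abs hdH hddH hH.2.2.2.2.2.1 y y')).2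
  have h4 := mul_le_mul_of_nonneg_left h3 hh.le
  have he2 : e ^ 2 ≤ δ ^ 2 := sq_le_sq' (abs_le.1 he).1 (abs_le.1 he).2
  have hd : y' - y = - s * (D - e) := by rw [hy']; ring
  have e1 : (x - y') ^ 2 / 2 = (x - y) ^ 2 / 2 + (y - x) * (y' - y) + (y' - y) ^ 2 / 2 := by ring
  have e2 : (y - x) + h * deriv H y = D + lam := by rw [hD]; ring
  have h5 : (x - y') ^ 2 / 2 + h * H y' ≤ (x - y) ^ 2 / 2 + h * H y + (D + lam) * (y' - y) +
      (1 + h * C) / 2 * (y' - y) ^ 2 := by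
    rw [← e2, e1]; nlinarith
  have h6 : (1 + h * C) / 2 * (y' - y) ^ 2 = s / 4 * (D - e) ^ 2 := by
    rw [hd]
    calc _ = (s * (1 + h * C)) * (s * (D - e) ^ 2) / 2 := by ring
      _ = _ := by rw [hs]; ring
  have h7 : D * (y' - y) = - s * D ^ 2 + s * (D * e) := by rw [hd]; ring
  have h8 : s * (D * e) ≤ s * (D ^ 2 / 2 + e ^ 2 / 2) := by
    apply mul_le_mul_of_nonneg_left _ hs0.le
    nlinarith [sq_nonneg (D - e)]
  have h9 := mul_le_mul_of_nonneg_left he2 hs0.le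
  nlinarith

set_option maxHeartbeats 4000000 in
lemma grad_bound {H : ℝ → ℝ} {C : ℝ} (hH : GrowthAssumptions H C) {h : ℝ} (hh : 0 < h)
    {ρ₀ ρ₁ : ℝ → ℝ} (h0 : IsP2 ρ₀) (h1 : IsP2 ρ₁)
    (hn : ¬ Integrable (fun x => ρ₁ x * Real.log (ρ₁ x)))
    (hmin : ∀ ρ ∈ Mset (M1 ρ₁), SchemeObjective H h ρ₀ ρ₁ ≤ SchemeObjective H h ρ₀ ρ)
    {lam : ℝ} (hlam : lam = (∫ y, (y + h * deriv H y) * ρ₁ y) - ∫ x, x * ρ₀ x)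
    {G : ℝ → ℝ} (hGdef : ∀ y, G y = y + h * deriv H y - lam)
    {Λ : NNReal} (hΛ : (Λ : ℝ) = 1 + h * C) (hG : LipschitzWith Λ G)
    {ε : ℝ} {pl : Measure (ℝ × ℝ)} (hpl : IsCoupling pl ρ₀ ρ₁)
    (hε : ∫ p : ℝ × ℝ, (p.1 - p.2) ^ 2 ∂pl < W2sq ρ₀ ρ₁ + ε)
    {s : ℝ} (hs : s * (1 + h * C) = 1 / 2) (hs0 : 0 < s) {δ : ℝ} (hδ : 0 < δ) :
    s / 4 * (∫ p : ℝ × ℝ, (G p.2 - p.1) ^ 2 ∂pl) ≤ ε + s / 2 * δ ^ 2 := by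
  have hprob := hpl.isProb h0
  have hGm : Measurable G := hG.continuous.measurable
  have hC := hH.2.2.1
  have hdHm := measurable_deriv H
  have hHm := hH.1.continuous.measurable
  let q : ℝ → ℝ := fun x => δ * (⌊x / δ⌋ : ℝ)
  have hqm : Measurable q := by fun_prop
  set c := ∫ p : ℝ × ℝ, (p.1 - q p.1) ∂pl with hc
  have hq := quant_bounds hδ
  have hIq : Integrable (fun p : ℝ × ℝ => p.1 - q p.1) pl :=
    Integrable.of_bound (by fun_prop) δ (ae_of_all _ fun p => by
      rw [Real.norm_eq_abs, abs_le]
      have := hq p.1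
      constructor <;> simp only [q] <;> linarith)
  have hc0 : 0 ≤ c := integral_nonneg fun p => (hq p.1).1
  have hcδ : c ≤ δ := by
    have : c ≤ ∫ _p : ℝ × ℝ, δ ∂pl := integral_mono hIq (integrable_const _) fun p => (hq p.1).2
    simpa using this
  let e : ℝ × ℝ → ℝ := fun p => c - (p.1 - q p.1)
  have hem : Measurable e := by fun_prop
  have hIe : Integrable e pl := (integrable_const c).sub hIq
  have heb : ∀ p, |e p| ≤ δ := fun p => by
    have := hq p.1
    rw [abs_le]
    constructor <;> simp only [e, q] <;> linarith
  have hemean : ∫ p, e p ∂pl = 0 := by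
    simp only [e]
    rw [integral_sub (integrable_const c) hIq]
    simp [hc]
  -- bound on G
  have habs : ∀ x : ℝ, |x| ≤ 1 + x ^ 2 := fun x => by
    rw [← sq_abs]; nlinarith [sq_nonneg (|x| - 1), abs_nonneg x]
  have hGb : ∀ y, |G y| ≤ Λ * |y| + |G 0| := fun y => by
    have h2 := hG.dist_le_mul y 0
    rw [Real.dist_eq, Real.dist_eq, sub_zero] at h2
    have := abs_sub_abs_le_abs_sub (G y) (G 0)
    linarith
  have hG2b : ∀ y, (G y) ^ 2 ≤ 2 * Λ ^ 2 * y ^ 2 + 2 * |G 0| ^ 2 := fun y => by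
    have h2 : (G y) ^ 2 ≤ (Λ * |y| + |G 0|) ^ 2 := sq_le_sq' (by
      have := hGb y; have := neg_abs_le (G y); linarith) ((le_abs_self _).trans (hGb y))
    rw [← sq_abs y]
    nlinarith [sq_nonneg (Λ * |y| - |G 0|)]
  let D : ℝ × ℝ → ℝ := fun p => G p.2 - p.1
  have hDm : Measurable D := by fun_prop
  have hID2 : Integrable (fun p => D p ^ 2) pl :=
    hpl.integrable_of_bound h0 h1 (by fun_prop) (2 + 4 * Λ ^ 2 + 4 * |G 0| ^ 2) fun p => by
      rw [abs_of_nonneg (sq_nonneg _)]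
      have h2 := hG2b p.2
      have h3 : D p ^ 2 ≤ 2 * (G p.2) ^ 2 + 2 * p.1 ^ 2 := by
        simp only [D]; nlinarith [sq_nonneg (G p.2 + p.1)]
      have h4 : 0 ≤ (Λ : ℝ) ^ 2 * p.1 ^ 2 := by positivity
      have h5 : 0 ≤ |G 0| ^ 2 * p.1 ^ 2 := by positivity
      have h6 : 0 ≤ |G 0| ^ 2 * p.2 ^ 2 := by positivity
      have h7 : 0 ≤ (Λ : ℝ) ^ 2 := by positivity
      nlinarith [sq_nonneg p.1, sq_nonneg p.2]
  have hIfst : Integrable (fun p : ℝ × ℝ => p.1) pl :=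
    hpl.integrable_of_bound h0 h1 measurable_fst 1 fun p => by
      nlinarith [habs p.1, sq_nonneg p.2]
  have hIsnd : Integrable (fun p : ℝ × ℝ => p.2) pl :=
    hpl.integrable_of_bound h0 h1 measurable_snd 1 fun p => by
      nlinarith [habs p.2, sq_nonneg p.1]
  have hID : Integrable D pl := by
    refine Integrable.mono' (hID2.add (integrable_const 1)) hDm.aestronglyMeasurable
      (ae_of_all _ fun p => ?_)
    have := habs (D p)
    simp only [Pi.add_apply, Real.norm_eq_abs]; linarith
  have hDmean : ∫ p, D p ∂pl = 0 := by
    have hIG : Integrable (fun p : ℝ × ℝ => G p.2) pl := by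
      have := hID.add hIfst
      refine this.congr (ae_of_all _ fun p => ?_)
      simp [D]
    have e1 : ∫ p, D p ∂pl = (∫ p : ℝ × ℝ, G p.2 ∂pl) - ∫ p : ℝ × ℝ, p.1 ∂pl :=
      integral_sub hIG hIfst
    rw [e1, hpl.int_snd h1 hGm, hpl.int_fst h0 (f := fun x => x) measurable_id]
    have hIyH : Integrable (fun y => (y + h * deriv H y) * ρ₁ y) := by
      have hy : Integrable (fun y => y * ρ₁ y) :=
        h1.integrable_of_bound measurable_id 1 fun x => by rw [one_mul]; exact habs x
      refine (hy.add ((growth_dH_int hH h1).const_mul h)).congr (ae_of_all _ fun x => ?_)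
      simp only [Pi.add_apply]; ring
    have e2 : ∫ y, G y * ρ₁ y = (∫ y, (y + h * deriv H y) * ρ₁ y) - lam := by
      have : ∀ y, G y * ρ₁ y = (y + h * deriv H y) * ρ₁ y - lam * ρ₁ y := fun y => by
        rw [hGdef]; ring
      simp only [this]
      rw [integral_sub hIyH (h1.2.1.const_mul _), integral_const_mul, h1.2.2.1, mul_one]
    rw [e2, hlam]; simp
  -- the new variable
  let Y : ℝ × ℝ → ℝ := fun p => p.2 - s * D p + s * e p
  have hYm : Measurable Y := by fun_prop
  have hIYdiff : Integrable (fun p => Y p - p.2) pl := by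
    refine ((hIe.const_mul s).sub (hID.const_mul s)).congr (ae_of_all _ fun p => ?_)
    simp only [Y, Pi.sub_apply]; ring
  have hYdiff : ∫ p, (Y p - p.2) ∂pl = 0 := by
    have : ∀ p, Y p - p.2 = s * e p - s * D p := fun p => by simp only [Y]; ring
    simp only [this]
    rw [integral_sub (hIe.const_mul s) (hID.const_mul s), integral_const_mul, integral_const_mul,
      hemean, hDmean]
    simp
  have hIY2 : Integrable (fun p => Y p ^ 2) pl := by
    refine Integrable.mono' (((hpl.integrable_sq_snd h1).const_mul 3).add
      ((hID2.const_mul (3 * s ^ 2)).add (integrable_const (3 * s ^ 2 * δ ^ 2))))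
      (hYm.pow_const 2).aestronglyMeasurable (ae_of_all _ fun p => ?_)
    rw [Real.norm_eq_abs, abs_of_nonneg (sq_nonneg _)]
    simp only [Pi.add_apply]
    have he2 : (e p) ^ 2 ≤ δ ^ 2 := sq_le_sq' (abs_le.1 (heb p)).1 (abs_le.1 (heb p)).2
    have h2 : Y p ^ 2 ≤ 3 * p.2 ^ 2 + 3 * (s * D p) ^ 2 + 3 * (s * e p) ^ 2 := by
      simp only [Y]
      nlinarith [sq_nonneg (p.2 + s * D p), sq_nonneg (p.2 - s * e p),
        sq_nonneg (s * D p + s * e p)]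
    have h3 := mul_le_mul_of_nonneg_left he2 (sq_nonneg s)
    nlinarith
  -- absolute continuity
  have hac : pl.map Y ≪ volume := by
    refine Measure.AbsolutelyContinuous.mk fun A hA hA0 => ?_
    rw [Measure.map_apply hYm hA]
    let P : ℤ → ℝ → ℝ := fun n y => y - s * G y + s * (δ * n + c)
    have hP : ∀ n, AntilipschitzWith 2 (P n) := fun n => by
      refine AntilipschitzWith.of_le_mul_dist fun y z => ?_
      have h2 := hG.dist_le_mul y z
      rw [hΛ] at h2
      rw [Real.dist_eq] at *
      rw [Real.dist_eq] at *
      have h3 : P n y - P n z = (y - z) - s * (G y - G z) := by simp only [P]; ring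
      have h4 : |s * (G y - G z)| ≤ 1 / 2 * |y - z| := by
        rw [abs_mul, abs_of_pos hs0, ← hs]
        have := mul_le_mul_of_nonneg_left h2 hs0.le
        linarith
      have h5 := abs_sub_abs_le_abs_sub (y - z) (s * (G y - G z))
      rw [h3]
      push_cast
      linarith
    have hPnull : ∀ n, volume (P n ⁻¹' A) = 0 := fun n => by
      have h2 := (hP n).hausdorffMeasure_preimage_le (d := 1) zero_le_one A
      rw [hausdorffMeasure_real, hA0] at h2
      simpa using h2
    have hPm : ∀ n, Measurable (P n) := fun n => by fun_prop
    have hsub : Y ⁻¹' A ⊆ ⋃ n : ℤ, Prod.snd ⁻¹' (P n ⁻¹' A) := by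
      intro p hp
      refine Set.mem_iUnion.2 ⟨⌊p.1 / δ⌋, ?_⟩
      have : P ⌊p.1 / δ⌋ p.2 = Y p := by simp only [P, Y, D, e, q]; ring
      simp only [Set.mem_preimage, this]
      exact hp
    refine measure_mono_null hsub (measure_iUnion_null fun n => ?_)
    rw [← Measure.map_apply measurable_snd (hPm n hA), hpl.2]
    exact dens_ac _ (hPnull n)
  have hprob2 : IsProbabilityMeasure (pl.map Y) :=
    Measure.isProbabilityMeasure_map hYm.aemeasurable
  obtain ⟨f, hf, hfd⟩ := dens_of_ac (pl.map Y) hac (by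
    rw [integrable_map_measure (by fun_prop) hYm.aemeasurable]; exact hIY2)
  have hfint : ∀ φ : ℝ → ℝ, Measurable φ → ∫ x, φ x * f x = ∫ p, φ (Y p) ∂pl := fun φ hφ => by
    rw [← integral_dens hf, hfd, integral_map hYm.aemeasurable hφ.aestronglyMeasurable]
  have hIxf : Integrable (fun x => x * f x) :=
    hf.integrable_of_bound measurable_id 1 fun x => by rw [one_mul]; exact habs x
  have hIxρ : Integrable (fun x => x * ρ₁ x) :=
    h1.integrable_of_bound measurable_id 1 fun x => by rw [one_mul]; exact habs x
  have hMf : ∫ x, x * f x = ∫ x, x * ρ₁ x := by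
    rw [hfint (fun x => x) measurable_id, ← hpl.int_snd h1 (f := fun x => x) measurable_id]
    have : ∫ p, Y p ∂pl = ∫ p, ((Y p - p.2) + p.2) ∂pl := by simp
    rw [this, integral_add hIYdiff hIsnd, hYdiff, zero_add]
  have hM : M1 (fun x => (f x + ρ₁ x) / 2) = M1 ρ₁ := by
    unfold M1
    rw [mix_int (φ := fun x => x) hIxf hIxρ, hMf]; ring
  have hobj := hmin _ ⟨mix_isP2 hf h1, hM⟩
  have hn2 := mix_entropy hf h1 hn
  unfold SchemeObjective FreeEnergy at hobj
  rw [integral_undef hn, integral_undef hn2,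
    mix_int (growth_H_int hH hf) (growth_H_int hH h1)] at hobj
  -- coupling
  have hm : Measurable (fun p : ℝ × ℝ => (p.1, Y p)) := measurable_fst.prodMk hYm
  have hcoup : IsCoupling ((2⁻¹ : ENNReal) • pl.map (fun p => (p.1, Y p)) + (2⁻¹ : ENNReal) • pl)
      ρ₀ (fun x => (f x + ρ₁ x) / 2) := by
    constructor
    · rw [Measure.map_add _ _ measurable_fst, Measure.map_smul, Measure.map_smul,
        Measure.map_map measurable_fst hm, ← hpl.1]
      have : (Prod.fst ∘ fun p : ℝ × ℝ => (p.1, Y p)) = Prod.fst := rfl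
      rw [this, ← add_smul, ENNReal.inv_two_add_inv_two, one_smul]
    · rw [Measure.map_add _ _ measurable_snd, Measure.map_smul, Measure.map_smul,
        Measure.map_map measurable_snd hm, mix_dens hf h1, hfd, hpl.2]
      rfl
  have hIsq : Integrable (fun p : ℝ × ℝ => (p.1 - p.2) ^ 2) pl :=
    hpl.integrable_of_bound h0 h1 (by fun_prop) 2 fun p => by
      rw [abs_of_nonneg (sq_nonneg _)]; nlinarith [sq_nonneg (p.1 + p.2)]
  have hIsqY : Integrable (fun p : ℝ × ℝ => (p.1 - Y p) ^ 2) pl := by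
    refine Integrable.mono' (((hpl.integrable_sq_fst h0).const_mul 2).add (hIY2.const_mul 2))
      (by fun_prop) (ae_of_all _ fun p => ?_)
    rw [Real.norm_eq_abs, abs_of_nonneg (sq_nonneg _)]
    have gen : ∀ a b : ℝ, (a - b) ^ 2 ≤ 2 * a ^ 2 + 2 * b ^ 2 := fun a b => by
      nlinarith [sq_nonneg (a + b)]
    exact gen _ _
  have hW : W2sq ρ₀ (fun x => (f x + ρ₁ x) / 2) ≤
      ((∫ p : ℝ × ℝ, (p.1 - Y p) ^ 2 ∂pl) + ∫ p : ℝ × ℝ, (p.1 - p.2) ^ 2 ∂pl) / 2 := by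
    refine (W2sq_le hcoup).trans (le_of_eq ?_)
    have hIm : Integrable (fun p : ℝ × ℝ => (p.1 - p.2) ^ 2)
        (pl.map (fun p => (p.1, Y p))) := by
      rw [integrable_map_measure (by fun_prop) hm.aemeasurable]
      exact hIsqY
    rw [integral_add_measure (hIm.smul_measure (by simp)) (hIsq.smul_measure (by simp)),
      integral_smul_measure, integral_smul_measure, integral_map hm.aemeasurable (by fun_prop)]
    simp
    ring
  have hIHY : Integrable (fun p => H (Y p)) pl := by
    have := (integrable_dens hf H).2 (growth_H_int hH hf)
    rw [hfd, integrable_map_measure hHm.aestronglyMeasurable hYm.aemeasurable] at this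
    exact this
  have hIHy : Integrable (fun p : ℝ × ℝ => H p.2) pl := by
    have := (integrable_dens h1 H).2 (growth_H_int hH h1)
    rw [← hpl.2, integrable_map_measure hHm.aestronglyMeasurable measurable_snd.aemeasurable] at this
    exact this
  have hmain : (∫ p : ℝ × ℝ, (p.1 - Y p) ^ 2 ∂pl) / 2 + h * ∫ p, H (Y p) ∂pl ≤
      (∫ p : ℝ × ℝ, (p.1 - p.2) ^ 2 ∂pl) / 2 + h * (∫ p : ℝ × ℝ, H p.2 ∂pl)
        - s / 4 * (∫ p, D p ^ 2 ∂pl) + s / 2 * δ ^ 2 := by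
    have hI1 : Integrable (fun p : ℝ × ℝ => (p.1 - Y p) ^ 2 / 2 + h * H (Y p)) pl :=
      (hIsqY.div_const 2).add (hIHY.const_mul h)
    have hA1 : Integrable (fun p : ℝ × ℝ => (p.1 - p.2) ^ 2 / 2 + h * H p.2) pl :=
      (hIsq.div_const 2).add (hIHy.const_mul h)
    have hA2 : Integrable (fun p : ℝ × ℝ => (p.1 - p.2) ^ 2 / 2 + h * H p.2
        + lam * (Y p - p.2)) pl := hA1.add (hIYdiff.const_mul lam)
    have hA3 : Integrable (fun p : ℝ × ℝ => (p.1 - p.2) ^ 2 / 2 + h * H p.2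
        + lam * (Y p - p.2) - s / 4 * D p ^ 2) pl := hA2.sub (hID2.const_mul _)
    have hle : ∫ p : ℝ × ℝ, ((p.1 - Y p) ^ 2 / 2 + h * H (Y p)) ∂pl ≤
        ∫ p : ℝ × ℝ, ((p.1 - p.2) ^ 2 / 2 + h * H p.2
        + lam * (Y p - p.2) - s / 4 * D p ^ 2 + s / 2 * δ ^ 2) ∂pl := by
      refine integral_mono hI1 (hA3.add (integrable_const _)) fun p => ?_
      exact grad_step_estimate hH hh hs hs0 p.1 p.2 (e p) (heb p)
        (by simp only [D, hGdef]) rfl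
    rw [integral_add (hIsqY.div_const 2) (hIHY.const_mul h), integral_add hA3 (integrable_const _),
      integral_sub hA2 (hID2.const_mul _), integral_add hA1 (hIYdiff.const_mul lam),
      integral_add (hIsq.div_const 2) (hIHy.const_mul h)] at hle
    simp only [integral_const_mul, integral_div, hYdiff] at hle
    simpa using hle
  rw [hfint H hHm, ← hpl.int_snd h1 hHm] at hobj
  linarith

lemma finite_entropy_step {H : ℝ → ℝ} {C : ℝ} (hH : GrowthAssumptions H C) {h : ℝ} (hh : 0 < h)
    {ρ₀ ρ₁ : ℝ → ℝ} (h0 : IsP2 ρ₀) (h1 : IsP2 ρ₁)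
    (hent : Integrable (fun x => ρ₀ x * Real.log (ρ₀ x)))
    (hmin : ∀ ρ ∈ Mset (M1 ρ₁), SchemeObjective H h ρ₀ ρ₁ ≤ SchemeObjective H h ρ₀ ρ) :
    Integrable (fun x => ρ₁ x * Real.log (ρ₁ x)) := by
  by_contra hn
  have hC := hH.2.2.1
  set lam := (∫ y, (y + h * deriv H y) * ρ₁ y) - ∫ x, x * ρ₀ x with hlam
  let G : ℝ → ℝ := fun y => y + h * deriv H y - lam
  let Λ : NNReal := ⟨1 + h * C, by positivity⟩
  have hΛ : (Λ : ℝ) = 1 + h * C := rfl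
  have hΛ0 : 0 < Λ := by
    rw [← NNReal.coe_pos, hΛ]; positivity
  obtain ⟨hdH, hddH⟩ := growth_derivs hH
  have hG' : ∀ y, HasDerivAt G (1 + h * deriv (deriv H) y) y := fun y =>
    (((hasDerivAt_id y).add ((hddH y).const_mul h)).sub_const lam)
  have hG : LipschitzWith Λ G := by
    refine lipschitzWith_of_nnnorm_deriv_le (fun y => (hG' y).differentiableAt) fun y => ?_
    rw [(hG' y).deriv, ← NNReal.coe_le_coe, coe_nnnorm, hΛ, Real.norm_eq_abs]
    have h2 := abs_le.1 (hH.2.2.2.2.2.1 y)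
    have h3 := mul_le_mul_of_nonneg_left h2.1 hh.le
    have h4 := mul_le_mul_of_nonneg_left h2.2 hh.le
    rw [abs_le]; constructor <;> nlinarith
  let s : ℝ := 1 / (2 * (1 + h * C))
  have hp : 0 < 1 + h * C := by positivity
  have hs : s * (1 + h * C) = 1 / 2 := by simp only [s]; field_simp
  have hs0 : 0 < s := by simp only [s]; positivity
  have hGm : Measurable G := hG.continuous.measurable
  -- near-optimal couplings are concentrated near the graph
  have hconc : ∀ r : ℝ, 0 < r → ∃ pl : Measure (ℝ × ℝ), IsCoupling pl ρ₀ ρ₁ ∧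
      ∫ p : ℝ × ℝ, (G p.2 - p.1) ^ 2 ∂pl ≤ r ^ 2 := fun r hr => by
    obtain ⟨pl, hpl, hlt⟩ := exists_coupling_lt h0 h1 (ε := s * r ^ 2 / 8) (by positivity)
    refine ⟨pl, hpl, ?_⟩
    have := grad_bound hH hh h0 h1 hn hmin hlam (fun y => rfl) hΛ hG hpl hlt hs hs0
      (δ := r / 2) (by positivity)
    have h3 : s / 4 * (∫ p : ℝ × ℝ, (G p.2 - p.1) ^ 2 ∂pl) ≤ s / 4 * r ^ 2 := by
      refine this.trans (le_of_eq ?_); ring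
    exact le_of_mul_le_mul_left h3 (by positivity)
  have hP0 := h0.isProb
  have hP1 := h1.isProb
  have hP2 : IsProbabilityMeasure ((densMeasure ρ₁).map G) :=
    Measure.isProbabilityMeasure_map hGm.aemeasurable
  have hmap : (densMeasure ρ₁).map G = densMeasure ρ₀ := by
    refine measure_eq_of_lip fun f k hfk hf0 hf1 => ?_
    have hfm : Measurable f := hfk.continuous.measurable
    rw [integral_map hGm.aemeasurable hfm.aestronglyMeasurable]
    have key : ∀ r : ℝ, 0 < r →
        |(∫ x, f (G x) ∂(densMeasure ρ₁)) - ∫ x, f x ∂(densMeasure ρ₀)| ≤ k * r := fun r hr => by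
      obtain ⟨pl, hpl, hle⟩ := hconc r hr
      have hprob := hpl.isProb h0
      have hI2 : Integrable (fun p : ℝ × ℝ => (G p.2 - p.1) ^ 2) pl := by
        refine hpl.integrable_of_bound h0 h1 (by fun_prop) (2 + 4 * Λ ^ 2 + 4 * |G 0| ^ 2)
          fun p => ?_
        rw [abs_of_nonneg (sq_nonneg _)]
        have e1 := hG.dist_le_mul p.2 0
        rw [Real.dist_eq, Real.dist_eq, sub_zero] at e1
        have e2 : |G p.2| ≤ Λ * |p.2| + |G 0| := by
          have := abs_sub_abs_le_abs_sub (G p.2) (G 0)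
          linarith
        have e3 : (G p.2) ^ 2 ≤ 2 * Λ ^ 2 * p.2 ^ 2 + 2 * |G 0| ^ 2 := by
          have h2 : (G p.2) ^ 2 ≤ (Λ * |p.2| + |G 0|) ^ 2 := sq_le_sq' (by
            have := neg_abs_le (G p.2); linarith) ((le_abs_self _).trans e2)
          rw [← sq_abs p.2]
          nlinarith [sq_nonneg (Λ * |p.2| - |G 0|)]
        have h4 : 0 ≤ (Λ : ℝ) ^ 2 * p.1 ^ 2 := by positivity
        have h5 : 0 ≤ |G 0| ^ 2 * p.1 ^ 2 := by positivity
        have h6 : 0 ≤ |G 0| ^ 2 * p.2 ^ 2 := by positivity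
        have h7 : 0 ≤ (Λ : ℝ) ^ 2 := by positivity
        nlinarith [sq_nonneg p.1, sq_nonneg p.2, sq_nonneg (G p.2 + p.1)]
      have hbd : ∀ g : ℝ × ℝ → ℝ, Measurable g → Integrable (fun p => f (g p)) pl := fun g hg =>
        Integrable.of_bound (hfm.comp hg).aestronglyMeasurable 1 (ae_of_all _ fun p => by
          rw [Real.norm_eq_abs, abs_of_nonneg (hf0 _)]; exact hf1 _)
      have e1 : ∫ x, f (G x) ∂(densMeasure ρ₁) = ∫ p : ℝ × ℝ, f (G p.2) ∂pl := by
        rw [← hpl.2, integral_map measurable_snd.aemeasurable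
          (show Measurable (fun x => f (G x)) from hfm.comp hGm).aestronglyMeasurable]
      have e2 : ∫ x, f x ∂(densMeasure ρ₀) = ∫ p : ℝ × ℝ, f p.1 ∂pl := by
        rw [← hpl.1, integral_map measurable_fst.aemeasurable hfm.aestronglyMeasurable]
      rw [e1, e2, ← integral_sub (hbd (fun p => G p.2) (hGm.comp measurable_snd))
        (hbd (fun p => p.1) measurable_fst)]
      have h3 : ‖∫ p : ℝ × ℝ, (f (G p.2) - f p.1) ∂pl‖ ≤
          ∫ p : ℝ × ℝ, (k * (1 / (2 * r)) * (G p.2 - p.1) ^ 2 + k * (r / 2)) ∂pl := by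
        refine norm_integral_le_of_norm_le ((hI2.const_mul _).add (integrable_const _))
          (ae_of_all _ fun p => ?_)
        have h4 := hfk.dist_le_mul (G p.2) p.1
        rw [Real.dist_eq, Real.dist_eq] at h4
        rw [Real.norm_eq_abs]
        refine h4.trans ?_
        have h5 : |G p.2 - p.1| ≤ 1 / (2 * r) * (G p.2 - p.1) ^ 2 + r / 2 := by
          rw [← sq_abs]
          have : 1 / (2 * r) * |G p.2 - p.1| ^ 2 + r / 2 - |G p.2 - p.1| =
              (|G p.2 - p.1| - r) ^ 2 / (2 * r) := by field_simp; ring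
          have h6 : 0 ≤ (|G p.2 - p.1| - r) ^ 2 / (2 * r) := by positivity
          linarith
        have := mul_le_mul_of_nonneg_left h5 k.coe_nonneg
        linarith
      rw [integral_add (hI2.const_mul _) (integrable_const _), integral_const_mul] at h3
      rw [← Real.norm_eq_abs]
      refine h3.trans ?_
      have h7 : (k : ℝ) * (1 / (2 * r)) * (∫ p : ℝ × ℝ, (G p.2 - p.1) ^ 2 ∂pl) ≤
          k * (1 / (2 * r)) * r ^ 2 := mul_le_mul_of_nonneg_left hle (by positivity)
      have h8 : (k : ℝ) * (1 / (2 * r)) * r ^ 2 = k * (r / 2) := by field_simp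
      simp only [integral_const, probReal_univ, one_smul]
      linarith
    have hz : |(∫ x, f (G x) ∂(densMeasure ρ₁)) - ∫ x, f x ∂(densMeasure ρ₀)| ≤ 0 := by
      refine le_of_forall_pos_le_add fun η hη => ?_
      have hk1 : 0 < (k : ℝ) + 1 := by positivity
      refine (key (η / (k + 1)) (by positivity)).trans ?_
      rw [zero_add, mul_div_assoc', div_le_iff₀ hk1]
      nlinarith
    have := abs_nonpos_iff.1 hz
    linarith
  -- measurable representative
  obtain ⟨ρ', hρ'm, hρ'⟩ := h1.2.1.aestronglyMeasurable.aemeasurable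
  have hae : ρ₁ =ᵐ[volume] fun x => max (ρ' x) 0 := by
    filter_upwards [hρ'] with x hx
    rw [← hx, max_eq_left (h1.1 x)]
  have hd : densMeasure ρ₁ = densMeasure (fun x => max (ρ' x) 0) := by
    unfold densMeasure
    refine withDensity_congr_ae ?_
    filter_upwards [hae] with x hx
    rw [hx]
  rw [hd] at hmap
  have hfin2 : ∫⁻ x, ENNReal.ofReal (max (ρ' x) 0) ≠ ⊤ := by
    have : Integrable (fun x => max (ρ' x) 0) := h1.2.1.congr hae
    exact this.lintegral_lt_top.ne
  have := entropy_push (hρ'm.max measurable_const) (fun x => le_max_right _ _) hfin2 h0 hΛ0 hG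
    hmap hent
  apply hn
  apply entropy_integrable_of_pos h1
  convert this using 1
  refine lintegral_congr_ae ?_
  filter_upwards [hae] with x hx
  rw [hx]


lemma abs_le_one_add_sq (x : ℝ) : |x| ≤ 1 + x ^ 2 := by
  rw [← sq_abs]; nlinarith [sq_nonneg (|x| - 1), abs_nonneg x]

lemma weak_step_eps {H : ℝ → ℝ} {C : ℝ} (hH : GrowthAssumptions H C) {h : ℝ} (hh : 0 < h)
    {ρ₀ ρ₁ : ℝ → ℝ} (h0 : IsP2 ρ₀) (h1 : IsP2 ρ₁)
    (hent : Integrable (fun x => ρ₁ x * Real.log (ρ₁ x)))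
    (hmin : ∀ ρ ∈ Mset (M1 ρ₁), SchemeObjective H h ρ₀ ρ₁ ≤ SchemeObjective H h ρ₀ ρ)
    {ζ ζ₁ ζ₂ : ℝ → ℝ} (hζ : ∀ x, HasDerivAt ζ (ζ₁ x) x) (hζ1 : ∀ x, HasDerivAt ζ₁ (ζ₂ x) x)
    (hζ2m : Measurable ζ₂) {A B K : ℝ} (hA : ∀ x, |ζ x| ≤ A) (hB : ∀ x, |ζ₁ x| ≤ B)
    (hK : ∀ x, |ζ₂ x| ≤ K) {ε : ℝ} (hε : 0 < ε) (hεK : √ε * K ≤ 1 / 2) :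
    h * |(∫ x, (ρ₁ x - ρ₀ x) / h * ζ x)
      + ∫ x, ((deriv H x - ((∫ x, deriv H x * ρ₁ x) + (1 / h) * ∫ x, (ρ₁ x - ρ₀ x) * x)) * ζ₁ x
        - ζ₂ x) * ρ₁ x| ≤
      K / 2 * (W2sq ρ₀ ρ₁ + ε) + (1 / 2 + ((B + |∫ x, ζ₁ x * ρ₁ x|) ^ 2 / 2 +
        h * (C / 2 * (B + |∫ x, ζ₁ x * ρ₁ x|) ^ 2 + 2 * K ^ 2))) * √ε := by
  obtain ⟨pl, hpl, hlt⟩ := exists_coupling_lt h0 h1 hε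
  have hprob := hpl.isProb h0
  have hC := hH.2.2.1
  have hζm : Measurable ζ :=
    (continuous_iff_continuousAt.2 fun x => (hζ x).continuousAt).measurable
  have hζ1m : Measurable ζ₁ :=
    (continuous_iff_continuousAt.2 fun x => (hζ1 x).continuousAt).measurable
  have hA0 : 0 ≤ A := (abs_nonneg _).trans (hA 0)
  have hB0 : 0 ≤ B := (abs_nonneg _).trans (hB 0)
  have hK0 : 0 ≤ K := (abs_nonneg _).trans (hK 0)
  have bdd : ∀ {ρ : ℝ → ℝ}, IsP2 ρ → ∀ {f : ℝ → ℝ}, Measurable f → ∀ {D : ℝ}, 0 ≤ D →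
      (∀ x, |f x| ≤ D) → Integrable (fun x => f x * ρ x) := fun hρ f hf D hD hfD =>
    hρ.integrable_of_bound hf D fun x => by nlinarith [hfD x, mul_nonneg hD (sq_nonneg x)]
  have hx : ∀ {ρ : ℝ → ℝ}, IsP2 ρ → Integrable (fun x => x * ρ x) := fun hρ =>
    hρ.integrable_of_bound (f := fun x => x) measurable_id 1 fun x => by
      rw [one_mul]; exact abs_le_one_add_sq x
  have I1 := bdd h1 hζm hA0 hA
  have I0 := bdd h0 hζm hA0 hA
  have I2 := bdd h1 hζ1m hB0 hB
  have I3 := bdd h1 hζ2m hK0 hK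
  have IH := growth_dH_int hH h1
  have IHζ : Integrable (fun x => deriv H x * ζ₁ x * ρ₁ x) := by
    refine (IH.bdd_mul (c := B) hζ1m.aestronglyMeasurable (ae_of_all _ hB)).congr
      (ae_of_all _ fun x => ?_)
    simp only; ring
  set m := ∫ x, ζ₁ x * ρ₁ x with hm
  -- marginal integrals
  have hJI : Integrable (fun p : ℝ × ℝ => (p.2 - p.1) * ζ₁ p.2) pl :=
    hpl.integrable_of_bound h0 h1 (by fun_prop) (2 * B) fun p => by
      rw [abs_mul]
      have e1 : |p.2 - p.1| ≤ 2 * (1 + p.1 ^ 2 + p.2 ^ 2) := by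
        have := abs_sub p.2 p.1
        have := abs_le_one_add_sq p.1
        have := abs_le_one_add_sq p.2
        nlinarith [sq_nonneg p.1, sq_nonneg p.2]
      calc _ ≤ (2 * (1 + p.1 ^ 2 + p.2 ^ 2)) * B :=
            mul_le_mul e1 (hB _) (abs_nonneg _) (by positivity)
        _ = _ := by ring
  have hbI : ∀ g : ℝ × ℝ → ℝ, Measurable g → Integrable (fun p => ζ (g p)) pl := fun g hg =>
    Integrable.of_bound (hζm.comp hg).aestronglyMeasurable A (ae_of_all _ fun p => hA _)
  have hIfst : Integrable (fun p : ℝ × ℝ => p.1) pl :=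
    hpl.integrable_of_bound h0 h1 measurable_fst 1 fun p => by
      nlinarith [abs_le_one_add_sq p.1, sq_nonneg p.2]
  have hIsnd : Integrable (fun p : ℝ × ℝ => p.2) pl :=
    hpl.integrable_of_bound h0 h1 measurable_snd 1 fun p => by
      nlinarith [abs_le_one_add_sq p.2, sq_nonneg p.1]
  have hIsq : Integrable (fun p : ℝ × ℝ => (p.1 - p.2) ^ 2) pl :=
    hpl.integrable_of_bound h0 h1 (by fun_prop) 2 fun p => by
      rw [abs_of_nonneg (sq_nonneg _)]; nlinarith [sq_nonneg (p.1 + p.2)]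
  -- Euler-Lagrange
  have hEL := fun (s : ℝ) (hs : |s| * K ≤ 1 / 2) =>
    EL_ineq hH hh h0 h1 hent hmin (g := fun x => ζ₁ x - m) (g' := ζ₂)
      (fun x => (hζ1 x).sub_const m) hζ2m (B := B + |m|) (K := K)
      (fun x => (abs_sub _ _).trans (by linarith [hB x])) hK
      (by
        have : ∀ x, (ζ₁ x - m) * ρ₁ x = ζ₁ x * ρ₁ x - m * ρ₁ x := fun x => by ring
        simp only [this]
        rw [integral_sub I2 (h1.2.1.const_mul m), integral_const_mul, h1.2.2.1, ← hm]; ring)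
      hpl hlt (s := s) hs
  have hsq := Real.sqrt_nonneg ε
  have hX := EL_abs hε (hEL √ε (by rw [abs_of_nonneg hsq]; exact hεK))
    (hEL (-√ε) (by rw [abs_neg, abs_of_nonneg hsq]; exact hεK))
  -- Taylor term
  set J := ∫ p : ℝ × ℝ, (p.2 - p.1) * ζ₁ p.2 ∂pl with hJ
  have hT : |(∫ x, ζ x * ρ₀ x) - (∫ x, ζ x * ρ₁ x) + J| ≤ K / 2 * (W2sq ρ₀ ρ₁ + ε) := by
    have hd : Integrable (fun p : ℝ × ℝ => ζ p.1 - ζ p.2) pl :=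
      (hbI _ measurable_fst).sub (hbI _ measurable_snd)
    rw [← hpl.int_fst h0 hζm, ← hpl.int_snd h1 hζm, hJ,
      ← integral_sub (hbI _ measurable_fst) (hbI _ measurable_snd),
      ← integral_add hd hJI,
      ← Real.norm_eq_abs]
    refine (norm_integral_le_of_norm_le (hIsq.const_mul (K / 2)) (ae_of_all _ fun p => ?_)).trans ?_
    · have := taylor_abs hζ hζ1 hK p.2 p.1
      rw [Real.norm_eq_abs]
      refine le_trans (le_of_eq ?_) this
      congr 1; ring
    · rw [integral_const_mul]
      exact mul_le_mul_of_nonneg_left hlt.le (by positivity)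
  -- rewriting
  have e1 : ∫ p : ℝ × ℝ, (p.2 - p.1) * (ζ₁ p.2 - m) ∂pl =
      J - m * ((∫ x, x * ρ₁ x) - ∫ x, x * ρ₀ x) := by
    have : ∀ p : ℝ × ℝ, (p.2 - p.1) * (ζ₁ p.2 - m) = (p.2 - p.1) * ζ₁ p.2 - m * (p.2 - p.1) :=
      fun p => by ring
    simp only [this]
    have hd : Integrable (fun p : ℝ × ℝ => p.2 - p.1) pl := hIsnd.sub hIfst
    rw [integral_sub hJI (hd.const_mul m), integral_const_mul,
      integral_sub hIsnd hIfst, hpl.int_fst h0 (f := fun x => x) measurable_id,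
      hpl.int_snd h1 (f := fun x => x) measurable_id]
  have e2 : ∫ x, deriv H x * (ζ₁ x - m) * ρ₁ x =
      (∫ x, deriv H x * ζ₁ x * ρ₁ x) - m * ∫ x, deriv H x * ρ₁ x := by
    have : ∀ x, deriv H x * (ζ₁ x - m) * ρ₁ x =
      deriv H x * ζ₁ x * ρ₁ x - m * (deriv H x * ρ₁ x) := fun x => by ring
    simp only [this]
    rw [integral_sub IHζ (IH.const_mul m), integral_const_mul]
  have e3 : ∫ x, (ρ₁ x - ρ₀ x) / h * ζ x = ((∫ x, ζ x * ρ₁ x) - ∫ x, ζ x * ρ₀ x) / h := by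
    rw [← integral_sub I1 I0, ← integral_div]
    congr 1; ext x; ring
  have e4 : ∫ x, (ρ₁ x - ρ₀ x) * x = (∫ x, x * ρ₁ x) - ∫ x, x * ρ₀ x := by
    rw [← integral_sub (hx h1) (hx h0)]
    congr 1; ext x; ring
  have e5 : ∀ σ : ℝ, ∫ x, ((deriv H x - σ) * ζ₁ x - ζ₂ x) * ρ₁ x =
      (∫ x, deriv H x * ζ₁ x * ρ₁ x) - σ * m - ∫ x, ζ₂ x * ρ₁ x := fun σ => by
    have : ∀ x, ((deriv H x - σ) * ζ₁ x - ζ₂ x) * ρ₁ x =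
      deriv H x * ζ₁ x * ρ₁ x - σ * (ζ₁ x * ρ₁ x) - ζ₂ x * ρ₁ x := fun x => by ring
    simp only [this]
    have hd : Integrable (fun x => deriv H x * ζ₁ x * ρ₁ x - σ * (ζ₁ x * ρ₁ x)) :=
      IHζ.sub (I2.const_mul σ)
    rw [integral_sub hd I3, integral_sub IHζ (I2.const_mul σ),
      integral_const_mul]
  rw [e1, e2] at hX
  rw [e3, e5, e4]
  nth_rewrite 1 [← abs_of_pos hh]
  rw [← abs_mul]
  have e6 : ∀ a b c d e f z0 : ℝ, h * ((a - z0) / h + (b - (c + 1 / h * (d - e)) * m - f)) =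
      (J - m * (d - e) + h * (b - m * c - f)) - (z0 - a + J) := fun a b c d e f z0 => by
    field_simp; ring
  rw [e6]
  refine (abs_sub _ _).trans ?_
  linarith

lemma weak_step {H : ℝ → ℝ} {C : ℝ} (hH : GrowthAssumptions H C) {h : ℝ} (hh : 0 < h)
    {ρ₀ ρ₁ : ℝ → ℝ} (h0 : IsP2 ρ₀) (h1 : IsP2 ρ₁)
    (hent : Integrable (fun x => ρ₁ x * Real.log (ρ₁ x)))
    (hmin : ∀ ρ ∈ Mset (M1 ρ₁), SchemeObjective H h ρ₀ ρ₁ ≤ SchemeObjective H h ρ₀ ρ)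
    {ζ ζ₁ ζ₂ : ℝ → ℝ} (hζ : ∀ x, HasDerivAt ζ (ζ₁ x) x) (hζ1 : ∀ x, HasDerivAt ζ₁ (ζ₂ x) x)
    (hζ2m : Measurable ζ₂) {A B K : ℝ} (hA : ∀ x, |ζ x| ≤ A) (hB : ∀ x, |ζ₁ x| ≤ B)
    (hK : ∀ x, |ζ₂ x| ≤ K) :
    |(∫ x, (ρ₁ x - ρ₀ x) / h * ζ x)
      + ∫ x, ((deriv H x - ((∫ x, deriv H x * ρ₁ x) + (1 / h) * ∫ x, (ρ₁ x - ρ₀ x) * x)) * ζ₁ x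
        - ζ₂ x) * ρ₁ x| ≤ K / 2 * ((1 / h) * W2sq ρ₀ ρ₁) := by
  have key := fun (ε : ℝ) (hε : 0 < ε) (hεK : √ε * K ≤ 1 / 2) =>
    weak_step_eps hH hh h0 h1 hent hmin hζ hζ1 hζ2m hA hB hK hε hεK
  set Q := |(∫ x, (ρ₁ x - ρ₀ x) / h * ζ x)
      + ∫ x, ((deriv H x - ((∫ x, deriv H x * ρ₁ x) + (1 / h) * ∫ x, (ρ₁ x - ρ₀ x) * x)) * ζ₁ x
        - ζ₂ x) * ρ₁ x|
  set N := (1 / 2 + ((B + |∫ x, ζ₁ x * ρ₁ x|) ^ 2 / 2 +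
        h * (C / 2 * (B + |∫ x, ζ₁ x * ρ₁ x|) ^ 2 + 2 * K ^ 2)))
  have hlim : h * Q ≤ K / 2 * (W2sq ρ₀ ρ₁ + 0) + N * √0 := by
    have hc : Continuous fun ε : ℝ => K / 2 * (W2sq ρ₀ ρ₁ + ε) + N * √ε := by fun_prop
    have hc2 : Continuous fun ε : ℝ => √ε * K := by fun_prop
    refine ge_of_tendsto (hc.continuousWithinAt (s := Set.Ioi 0) (x := 0)) ?_
    have hev : ∀ᶠ ε in nhds (0 : ℝ), √ε * K < 1 / 2 :=
      hc2.continuousAt.eventually_lt continuousAt_const (by simp)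
    filter_upwards [nhdsWithin_le_nhds hev, self_mem_nhdsWithin] with ε h2 h3
    exact key ε h3 h2.le
  rw [Real.sqrt_zero, add_zero, mul_zero, add_zero] at hlim
  have : K / 2 * ((1 / h) * W2sq ρ₀ ρ₁) = (K / 2 * W2sq ρ₀ ρ₁) / h := by ring
  rw [this, le_div_iff₀ hh]
  linarith

lemma scheme_hmin {H l : ℝ → ℝ} {h : ℝ} {ρ0 : ℝ → ℝ} {ρs : ℕ → ℝ → ℝ}
    (hscheme : SolvesScheme H l h ρ0 ρs) (k : ℕ) :
    IsP2 (ρs (k + 1)) ∧ ∀ ρ ∈ Mset (M1 (ρs (k + 1))),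
      SchemeObjective H h (ρs k) (ρs (k + 1)) ≤ SchemeObjective H h (ρs k) ρ := by
  obtain ⟨⟨ha, hb⟩, hc⟩ := hscheme.2 (k + 1) (by omega)
  rw [hb]
  exact ⟨ha, by simpa using hc⟩

lemma scheme_finite {H : ℝ → ℝ} {C : ℝ} (hH : GrowthAssumptions H C) {l : ℝ → ℝ} {h : ℝ}
    (hh : 0 < h) {ρ0 : ℝ → ℝ} (hρ0 : IsP2 ρ0)
    (hF0 : Integrable (fun x => ρ0 x * Real.log (ρ0 x))) {ρs : ℕ → ℝ → ℝ}
    (hscheme : SolvesScheme H l h ρ0 ρs) (k : ℕ) :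
    IsP2 (ρs k) ∧ Integrable (fun x => ρs k x * Real.log (ρs k x)) := by
  induction k with
  | zero => rw [hscheme.1]; exact ⟨hρ0, hF0⟩
  | succ k ih =>
    obtain ⟨ha, hb⟩ := scheme_hmin hscheme k
    exact ⟨ha, finite_entropy_step hH hh ih.1 ha ih.2 hb⟩

/-- Lemma 3.6, time-discrete approximation of the weak formulation. -/
theorem discrete_weak_formulation
    (H : ℝ → ℝ) (C : ℝ) (hH : GrowthAssumptions H C)
    (l : ℝ → ℝ) (hl : LipschitzBoundedOnNonneg l)
    (h : ℝ) (hh : 0 < h)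
    (ρ0 : ℝ → ℝ) (hρ0 : ρ0 ∈ Mset (l 0)) (hF0 : FiniteFreeEnergy H ρ0)
    (ρs : ℕ → ℝ → ℝ) (hscheme : SolvesScheme H l h ρ0 ρs) :
    ∀ ζ : ℝ → ℝ, ContDiff ℝ (⊤ : ℕ∞) ζ → HasCompactSupport ζ →
      ∀ k : ℕ, 1 ≤ k →
        |(∫ x, (ρs k x - ρs (k - 1) x) / h * ζ x)
            + ∫ x, ((deriv H x - discreteSigma H h ρs k) * deriv ζ x
                - deriv (deriv ζ) x) * ρs k x|
          ≤ (⨆ x : ℝ, |deriv (deriv ζ) x|) / 2 * ((1 / h) * W2sq (ρs (k - 1)) (ρs k)) := by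
  intro ζ hζ hζc k hk
  obtain ⟨k, rfl⟩ : ∃ j, k = j + 1 := ⟨k - 1, by omega⟩
  have h0 := scheme_finite hH hh hρ0.1 hF0.1 hscheme k
  have h1 := scheme_finite hH hh hρ0.1 hF0.1 hscheme (k + 1)
  have hmin := (scheme_hmin hscheme k).2
  have hc1 : ContDiff ℝ (⊤ : ℕ∞) (deriv ζ) := (contDiff_infty_iff_deriv.1 hζ).2
  have hc2 : ContDiff ℝ (⊤ : ℕ∞) (deriv (deriv ζ)) := (contDiff_infty_iff_deriv.1 hc1).2
  obtain ⟨A, hA⟩ := hζc.exists_bound_of_continuous hζ.continuous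
  obtain ⟨B, hB⟩ := hζc.deriv.exists_bound_of_continuous hc1.continuous
  obtain ⟨K, hK⟩ := hζc.deriv.deriv.exists_bound_of_continuous hc2.continuous
  have hbd : BddAbove (Set.range fun x : ℝ => |deriv (deriv ζ) x|) := by
    refine ⟨K, ?_⟩
    rintro _ ⟨x, rfl⟩
    exact hK x
  unfold discreteSigma
  simp only [Nat.add_sub_cancel]
  exact weak_step hH hh h0.1 h1.1 h1.2 hmin
    (fun x => ((contDiff_infty_iff_deriv.1 hζ).1 x).hasDerivAt)
    (fun x => ((contDiff_infty_iff_deriv.1 hc1).1 x).hasDerivAt)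
    hc2.continuous.measurable hA hB (fun x => le_ciSup hbd x)
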